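/- There are exactly 232 conjugacy classes of finite-index subgroups Γ̄ of PSL(2,ℤ) that have genus zero and satisfy n + 3·e₂(Γ̄) + 2·e₃(Γ̄) = 18, where n is the index of Γ̄. Among these 232 classes: exactly 26 are torsion-free; exactly 143 satisfy e₂(Γ̄) > 0; exactly 32 satisfy e₂(Γ̄) = 0 and e₃(Γ̄) = 1; and exactly 31 satisfy e₂(Γ̄) = 0 and e₃(Γ̄) ≥ 2. -/

import Mathlib

open Matrix

/-- `SL(2,ℤ)`: the group of 2×2 integer matrices of determinant 1. -/
abbrev SL2Z := Matrix.SpecialLinearGroup (Fin 2) ℤ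

instance : Fact (Even (Fintype.card (Fin 2))) := ⟨by simp⟩

/-- The subgroup `{±I}` of `SL(2,ℤ)`. -/
def pmOne : Subgroup SL2Z := Subgroup.zpowers (-1 : SL2Z)

instance : pmOne.Normal := by
  constructor
  intro x hx g
  obtain ⟨n, rfl⟩ := hx
  have h : Commute ((-1 : SL2Z) ^ n) g := (Commute.neg_one_left g).zpow_left n
  refine ⟨n, ?_⟩
  rw [← h.eq, mul_assoc, mul_inv_cancel, mul_one]

/-- `PSL(2,ℤ)`, the modular group, as the quotient of `SL(2,ℤ)` by `{±I}`. -/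
abbrev PSL2Z := SL2Z ⧸ pmOne

/-- The natural projection `ξ : SL(2,ℤ) → PSL(2,ℤ)`. -/
def xi : SL2Z →* PSL2Z := QuotientGroup.mk' pmOne

/-- The element `S` of `PSL(2,ℤ)`, the image of `[[0,-1],[1,0]]`. -/
def Sp : PSL2Z := xi ⟨!![0, -1; 1, 0], by norm_num [Matrix.det_fin_two_of]⟩

/-- The element `T` of `PSL(2,ℤ)`, the image of `[[1,1],[0,1]]`. -/
def Tp : PSL2Z := xi ⟨!![1, 1; 0, 1], by norm_num [Matrix.det_fin_two_of]⟩

/-- The number of left cosets in `PSL(2,ℤ)/Γ` fixed by `g` (for the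
left-multiplication action).  For `g = S` this is `e₂(Γ)`, for `g = S*T` it is `e₃(Γ)`. -/
noncomputable def nFix (g : PSL2Z) (Γ : Subgroup PSL2Z) : ℕ :=
  Nat.card {x : PSL2Z ⧸ Γ // g • x = x}

/-- The number of orbits of the cyclic subgroup generated by `g` on `PSL(2,ℤ)/Γ`.
For `g = S, S*T, T` these are `c₂(Γ), c₃(Γ), h(Γ)` respectively. -/
noncomputable def nOrb (g : PSL2Z) (Γ : Subgroup PSL2Z) : ℕ :=
  Nat.card (MulAction.orbitRel.Quotient (Subgroup.zpowers g) (PSL2Z ⧸ Γ))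

/-- `Γ` has genus zero: `c₂(Γ) + c₃(Γ) + h(Γ) = index(Γ) + 2`. -/
def GenusZero (Γ : Subgroup PSL2Z) : Prop :=
  nOrb Sp Γ + nOrb (Sp * Tp) Γ + nOrb Tp Γ = Γ.index + 2

/-- `Γ` is torsion free: it contains no nontrivial element of finite order. -/
def TorsionFree (Γ : Subgroup PSL2Z) : Prop :=
  ∀ x ∈ Γ, x ≠ 1 → ¬ IsOfFinOrder x

/-- Two subgroups of a group are conjugate. -/
def SubgroupConj {G : Type*} [Group G] (H K : Subgroup G) : Prop :=
  ∃ g : G, Subgroup.map (MulAut.conj g).toMonoidHom H = K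

/-- The number of conjugacy classes of subgroups of `PSL(2,ℤ)` satisfying `P`. -/
noncomputable def countClasses (P : Subgroup PSL2Z → Prop) : ℕ :=
  Nat.card (Quot fun A B : {Γ : Subgroup PSL2Z // P Γ} => SubgroupConj A.1 B.1)

/-- The index of the torsion free subgroup `Γ^tf` associated to `Γ`:
`index(Γ) + 3·e₂(Γ) + 2·e₃(Γ)`. -/
noncomputable def tfIdx (Γ : Subgroup PSL2Z) : ℕ :=
  Γ.index + 3 * nFix Sp Γ + 2 * nFix (Sp * Tp) Γ



/-! ### Presentation of the modular group -/

abbrev Up : PSL2Z := Sp * Tp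

theorem xi_neg (g : SL2Z) : xi (-g) = xi g := by
  apply QuotientGroup.eq.mpr
  refine ⟨1, ?_⟩
  simp

theorem xi_eq_iff (g h : SL2Z) : xi g = xi h ↔ g = h ∨ g = -h := by
  constructor
  · intro e
    obtain ⟨k, hk⟩ := QuotientGroup.eq.mp e
    rcases Int.even_or_odd k with he | ho
    · left
      have : (-1 : SL2Z) ^ k = 1 := he.neg_one_zpow
      simp only [this] at hk
      exact (inv_mul_eq_one.mp hk.symm)
    · right
      have : (-1 : SL2Z) ^ k = -1 := ho.neg_one_zpow
      simp only [this] at hk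
      rw [eq_inv_mul_iff_mul_eq] at hk
      rw [← hk]; simp
  · rintro (rfl | rfl)
    · rfl
    · rw [xi_neg]

theorem xi_surj : Function.Surjective xi := QuotientGroup.mk'_surjective _

def Sm : SL2Z := ⟨!![0, -1; 1, 0], by norm_num [Matrix.det_fin_two_of]⟩
def Tm : SL2Z := ⟨!![1, 1; 0, 1], by norm_num [Matrix.det_fin_two_of]⟩
def Um : SL2Z := ⟨!![0, -1; 1, 1], by norm_num [Matrix.det_fin_two_of]⟩

theorem Sm_mul_Tm : Sm * Tm = Um := by
  ext i j; fin_cases i <;> fin_cases j <;> rfl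

theorem Sp_eq : Sp = xi Sm := rfl
theorem Tp_eq : Tp = xi Tm := rfl
theorem Up_eq : Up = xi Um := by rw [← Sm_mul_Tm, map_mul]; rfl

theorem Sp_sq : Sp ^ 2 = 1 := by
  rw [Sp_eq, ← map_pow, ← map_one xi, xi_eq_iff]
  right
  ext i j; fin_cases i <;> fin_cases j <;> rfl

theorem Up_cube : Up ^ 3 = 1 := by
  rw [Up_eq, ← map_pow, ← map_one xi, xi_eq_iff]
  right
  ext i j; fin_cases i <;> fin_cases j <;> rfl

theorem Sp_mul_Sp : Sp * Sp = 1 := by rw [← pow_two, Sp_sq]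

theorem Tp_eq_SU : Tp = Sp * Up := by
  rw [← mul_assoc, Sp_mul_Sp, one_mul]

theorem gen_PSL : Subgroup.closure {Sp, Up} = ⊤ := by
  have h := SpecialLinearGroup.SL2Z_generators
  have h2 : (Subgroup.closure {ModularGroup.S, ModularGroup.T}).map xi = ⊤ := by
    rw [h, ← MonoidHom.range_eq_map, MonoidHom.range_eq_top]
    exact xi_surj
  rw [eq_top_iff, ← h2, MonoidHom.map_closure, Subgroup.closure_le]
  rintro _ ⟨g, (rfl | rfl), rfl⟩
  · exact Subgroup.subset_closure (Or.inl rfl)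
  · have : xi ModularGroup.T = Sp * Up := Tp_eq_SU
    rw [this]
    exact Subgroup.mul_mem _ (Subgroup.subset_closure (Or.inl rfl))
      (Subgroup.subset_closure (Or.inr rfl))

noncomputable def zhom {G : Type*} [Group G] (n : ℕ) (g : G) (h : g ^ n = 1) :
    Multiplicative (ZMod n) →* G :=
  AddMonoidHom.toMultiplicativeLeft
    (ZMod.lift n (A := Additive G) ⟨zmultiplesHom (Additive G) (Additive.ofMul g), by
      simp [← ofMul_pow, h]⟩)

theorem zhom_one {G : Type*} [Group G] (n : ℕ) (g : G) (h : g ^ n = 1) (k : ℤ) :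
    zhom n g h (Multiplicative.ofAdd (k : ZMod n)) = g ^ k := by
  simp [zhom]

abbrev Hfam (b : Bool) : Type := Multiplicative (ZMod (cond b 2 3))

noncomputable def pairHom {G : Type*} [Group G] (s u : G) (hs : s ^ 2 = 1) (hu : u ^ 3 = 1) :
    ∀ b : Bool, Hfam b →* G
  | true => zhom 2 s hs
  | false => zhom 3 u hu

/-- action of `SL2Z` on matrices by `g M gᵀ`. -/
def actSL : SL2Z →* Equiv.Perm (Matrix (Fin 2) (Fin 2) ℤ) where
  toFun g :=
    { toFun := fun M => g.1 * M * g.1ᵀ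
      invFun := fun M => (g⁻¹).1 * M * (g⁻¹).1ᵀ
      left_inv := by
        intro M
        have h1 : (g⁻¹).1 * g.1 = 1 := by
          exact congrArg Subtype.val (inv_mul_cancel g)
        have h2 : g.1ᵀ * (g⁻¹).1ᵀ = 1 := by rw [← Matrix.transpose_mul, h1, Matrix.transpose_one]
        calc _ = ((g⁻¹).1 * g.1) * M * (g.1ᵀ * (g⁻¹).1ᵀ) := by simp only [Matrix.mul_assoc]
          _ = M := by rw [h1, h2]; simp
      right_inv := by
        intro M
        have h1 : g.1 * (g⁻¹).1 = 1 := by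
          exact congrArg Subtype.val (mul_inv_cancel g)
        have h2 : (g⁻¹).1ᵀ * g.1ᵀ = 1 := by rw [← Matrix.transpose_mul, h1, Matrix.transpose_one]
        calc _ = (g.1 * (g⁻¹).1) * M * ((g⁻¹).1ᵀ * g.1ᵀ) := by simp only [Matrix.mul_assoc]
          _ = M := by rw [h1, h2]; simp }
  map_one' := by ext M : 1; simp
  map_mul' g h := by
    ext M : 1
    simp [Matrix.mul_assoc, Matrix.transpose_mul]

def actPSL : PSL2Z →* Equiv.Perm (Matrix (Fin 2) (Fin 2) ℤ) :=
  QuotientGroup.lift pmOne actSL (by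
    intro g hg
    have : pmOne ≤ actSL.ker := by
      rw [pmOne, Subgroup.zpowers_le, MonoidHom.mem_ker]
      ext M : 1
      simp [actSL]
    exact this hg)

theorem actPSL_xi (g : SL2Z) (M) : actPSL (xi g) M = g.1 * M * g.1ᵀ := rfl

def sgnSet : Bool → Set (Matrix (Fin 2) (Fin 2) ℤ)
  | true => {M | 0 < M 0 0 ∧ 0 < M 1 1 ∧ M 0 1 = M 1 0 ∧ 0 < M 0 1}
  | false => {M | 0 < M 0 0 ∧ 0 < M 1 1 ∧ M 0 1 = M 1 0 ∧ M 0 1 < 0}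

theorem S_pp (M) (hM : M ∈ sgnSet false) : actPSL Sp M ∈ sgnSet true := by
  obtain ⟨h1, h2, h3, h4⟩ := hM
  rw [Sp_eq, actPSL_xi]
  have e : Sm.1 = !![0, -1; 1, 0] := rfl
  rw [e]
  simp only [sgnSet, Set.mem_ofPred_eq, Matrix.mul_apply, Fin.sum_univ_two, Matrix.transpose_apply]
  simp
  omega

theorem U_pp (M) (hM : M ∈ sgnSet true) : actPSL Up M ∈ sgnSet false := by
  obtain ⟨h1, h2, h3, h4⟩ := hM
  rw [Up_eq, actPSL_xi]
  have e : Um.1 = !![0, -1; 1, 1] := rfl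
  rw [e]
  simp only [sgnSet, Set.mem_ofPred_eq, Matrix.mul_apply, Fin.sum_univ_two, Matrix.transpose_apply]
  simp
  omega

theorem U2_pp (M) (hM : M ∈ sgnSet true) : actPSL (Up ^ 2) M ∈ sgnSet false := by
  obtain ⟨h1, h2, h3, h4⟩ := hM
  rw [Up_eq, ← map_pow, actPSL_xi]
  have e : (Um ^ 2).1 = !![-1, -1; 1, 0] := by
    ext i j; fin_cases i <;> fin_cases j <;> rfl
  rw [e]
  simp only [sgnSet, Set.mem_ofPred_eq, Matrix.mul_apply, Fin.sum_univ_two, Matrix.transpose_apply]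
  simp
  omega

theorem lift_inj : Function.Injective
    (Monoid.CoprodI.lift (pairHom Sp Up Sp_sq Up_cube)) := by
  let _ : MulAction PSL2Z (Matrix (Fin 2) (Fin 2) ℤ) := MulAction.compHom _ actPSL
  refine Monoid.CoprodI.lift_injective_of_ping_pong (pairHom Sp Up Sp_sq Up_cube) ?_ sgnSet ?_ ?_ ?_
  · right
    refine ⟨false, ?_⟩
    have : Cardinal.mk (Hfam false) = 3 := by
      show Cardinal.mk (Fin 3) = 3
      simp
    rw [this]
  · rintro (_ | _)
    · exact ⟨!![1, -1; -1, 1], by simp [sgnSet]⟩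
    · exact ⟨!![1, 1; 1, 1], by simp [sgnSet]⟩
  · intro i j hij
    apply Set.disjoint_left.mpr
    intro M h1 h2
    cases i <;> cases j <;> simp [sgnSet] at h1 h2 hij <;> omega
  · intro i j hij h hh
    rintro _ ⟨M, hM, rfl⟩
    cases i <;> cases j
    · exact absurd rfl hij
    · -- i = false
      show actPSL (zhom 3 Up Up_cube h) M ∈ sgnSet false
      have : h = Multiplicative.ofAdd (((1:ℤ)) : ZMod 3) ∨ h = Multiplicative.ofAdd (((2:ℤ)) : ZMod 3) := by
        change Fin 3 at h
        change h ≠ (0 : Fin 3) at hh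
        change h = (1 : Fin 3) ∨ h = (2 : Fin 3)
        omega
      rcases this with rfl | rfl
      · rw [zhom_one, zpow_one]; exact U_pp M hM
      · rw [zhom_one]; exact U2_pp M hM
    · show actPSL (zhom 2 Sp Sp_sq h) M ∈ sgnSet true
      have : h = Multiplicative.ofAdd (((1:ℤ)) : ZMod 2) := by
        change Fin 2 at h
        change h ≠ (0 : Fin 2) at hh
        change h = (1 : Fin 2)
        omega
      subst this
      rw [zhom_one, zpow_one]; exact S_pp M hM
    · exact absurd rfl hij

theorem lift_surj : Function.Surjective
    (Monoid.CoprodI.lift (pairHom Sp Up Sp_sq Up_cube)) := by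
  rw [← MonoidHom.range_eq_top, eq_top_iff, ← gen_PSL, Subgroup.closure_le]
  rintro _ (rfl | rfl)
  · refine ⟨Monoid.CoprodI.of (i := true) (Multiplicative.ofAdd (((1:ℤ)) : ZMod 2)), ?_⟩
    rw [Monoid.CoprodI.lift_of]
    show zhom 2 Sp Sp_sq _ = _
    rw [zhom_one, zpow_one]
  · refine ⟨Monoid.CoprodI.of (i := false) (Multiplicative.ofAdd (((1:ℤ)) : ZMod 3)), ?_⟩
    rw [Monoid.CoprodI.lift_of]
    show zhom 3 Up Up_cube _ = _
    rw [zhom_one, zpow_one]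

/-- The universal property of `PSL(2,ℤ)` as a free product. -/
theorem exists_hom {G : Type*} [Group G] (s u : G) (hs : s ^ 2 = 1) (hu : u ^ 3 = 1) :
    ∃ φ : PSL2Z →* G, φ Sp = s ∧ φ Up = u := by
  let e := MulEquiv.ofBijective (Monoid.CoprodI.lift (pairHom Sp Up Sp_sq Up_cube))
    ⟨lift_inj, lift_surj⟩
  have he : ∀ x, e x = Monoid.CoprodI.lift (pairHom Sp Up Sp_sq Up_cube) x := fun x => rfl
  have hS : e.symm Sp = Monoid.CoprodI.of (i := true) (Multiplicative.ofAdd (((1:ℤ)) : ZMod 2)) := by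
    rw [MulEquiv.symm_apply_eq]
    rw [he, Monoid.CoprodI.lift_of]
    show _ = zhom 2 Sp Sp_sq _
    rw [zhom_one, zpow_one]
  have hU : e.symm Up = Monoid.CoprodI.of (i := false) (Multiplicative.ofAdd (((1:ℤ)) : ZMod 3)) := by
    rw [MulEquiv.symm_apply_eq]
    rw [he, Monoid.CoprodI.lift_of]
    show _ = zhom 3 Up Up_cube _
    rw [zhom_one, zpow_one]
  refine ⟨(Monoid.CoprodI.lift (pairHom s u hs hu)).comp e.symm.toMonoidHom, ?_, ?_⟩
  · show Monoid.CoprodI.lift (pairHom s u hs hu) (e.symm Sp) = _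
    rw [hS, Monoid.CoprodI.lift_of]
    show zhom 2 s hs _ = _
    rw [zhom_one, zpow_one]
  · show Monoid.CoprodI.lift (pairHom s u hs hu) (e.symm Up) = _
    rw [hU, Monoid.CoprodI.lift_of]
    show zhom 3 u hu _ = _
    rw [zhom_one, zpow_one]


/-! ### Torsion in the modular group -/

def mkSL (a b c d : ℤ) (h : a * d - b * c = 1) : SL2Z :=
  ⟨!![a, b; c, d], by rw [Matrix.det_fin_two_of]; exact h⟩

theorem mkSL_surj (A : SL2Z) : ∃ a b c d h, A = mkSL a b c d h := by
  refine ⟨A.1 0 0, A.1 0 1, A.1 1 0, A.1 1 1, ?_, ?_⟩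
  · have := A.2
    rwa [Matrix.det_fin_two] at this
  · apply Subtype.ext
    exact Matrix.eta_fin_two A.1

theorem mkSL_mul (a b c d h a' b' c' d' h') :
    (mkSL a b c d h * mkSL a' b' c' d' h').1 =
      !![a * a' + b * c', a * b' + b * d'; c * a' + d * c', c * b' + d * d'] := by
  show !![a, b; c, d] * !![a', b'; c', d'] = _
  exact Matrix.mul_fin_two _ _ _ _ _ _ _ _

theorem conjT (a b c d h) (k : ℤ) : ∃ h', IsConj (mkSL a b c d h)
    (mkSL (a + k * c) (b + k * (d - a) - k ^ 2 * c) c (d - k * c) h') := by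
  refine ⟨by linear_combination h, ?_⟩
  rw [isConj_iff]
  refine ⟨mkSL 1 k 0 1 (by ring), ?_⟩
  rw [mul_inv_eq_iff_eq_mul]
  apply Subtype.ext
  rw [mkSL_mul, mkSL_mul]
  ext i j; fin_cases i <;> fin_cases j <;> simp <;> ring

theorem conjS (a b c d h) : ∃ h', IsConj (mkSL a b c d h) (mkSL d (-c) (-b) a h') := by
  refine ⟨by linear_combination h, ?_⟩
  rw [isConj_iff]
  refine ⟨mkSL 0 (-1) 1 0 (by ring), ?_⟩
  rw [mul_inv_eq_iff_eq_mul]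
  apply Subtype.ext
  rw [mkSL_mul, mkSL_mul]
  ext i j; fin_cases i <;> fin_cases j <;> simp

theorem exists_round (m c : ℤ) (hc : c ≠ 0) : ∃ k : ℤ, |m + 2 * k * c| ≤ |c| := by
  have hpos : 0 < |c| := abs_pos.mpr hc
  have h1 := Int.emod_nonneg (m + |c|) (show 2 * |c| ≠ 0 by omega)
  have h2 := Int.emod_lt_of_pos (m + |c|) (show 0 < 2 * |c| by omega)
  have h3 := Int.mul_ediv_add_emod (m + |c|) (2 * |c|)
  set q := (m + |c|) / (2 * |c|)
  set r := (m + |c|) % (2 * |c|)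
  rcases abs_choice c with e | e
  · refine ⟨-q, ?_⟩
    have : m + 2 * (-q) * c = r - |c| := by
      rw [e] at h3 ⊢; linear_combination -h3
    rw [this, abs_le]; constructor <;> omega
  · refine ⟨q, ?_⟩
    have : m + 2 * q * c = r - |c| := by
      rw [e] at h3 ⊢; linear_combination -h3
    rw [this, abs_le]; constructor <;> omega

def Good (B : SL2Z) : Prop := xi B = Sp ∨ xi B = Up ∨ xi B = Up⁻¹

theorem good_S (h) : Good (mkSL 0 (-1) 1 0 h) := Or.inl rfl
theorem good_S' (h) : Good (mkSL 0 1 (-1) 0 h) := by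
  left; rw [Sp_eq, xi_eq_iff]; right
  apply Subtype.ext; ext i j; fin_cases i <;> fin_cases j <;> rfl
theorem good_U (h) : Good (mkSL 0 (-1) 1 1 h) := by
  right; left; rw [Up_eq]; rfl
theorem good_U' (h) : Good (mkSL 0 1 (-1) (-1) h) := by
  right; left; rw [Up_eq, xi_eq_iff]; right
  apply Subtype.ext; ext i j; fin_cases i <;> fin_cases j <;> rfl
theorem good_V (h) : Good (mkSL 1 1 (-1) 0 h) := by
  right; right; rw [Up_eq, ← map_inv, xi_eq_iff]; left
  apply Subtype.ext; ext i j; fin_cases i <;> fin_cases j <;> rfl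
theorem good_V' (h) : Good (mkSL (-1) (-1) 1 0 h) := by
  right; right; rw [Up_eq, ← map_inv, xi_eq_iff]; right
  apply Subtype.ext; ext i j; fin_cases i <;> fin_cases j <;> rfl

theorem mkSL_congr {a b c d h a' b' c' d'} (ha : a = a') (hb : b = b') (hc : c = c') (hd : d = d') :
    ∃ h', mkSL a b c d h = mkSL a' b' c' d' h' := by
  subst ha hb hc hd; exact ⟨h, rfl⟩

theorem elliptic_conj (N : ℕ) : ∀ a b c d h, c.natAbs ≤ N → |a + d| ≤ 1 →
    ∃ B, IsConj (mkSL a b c d h) B ∧ Good B := by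
  induction N with
  | zero =>
    intro a b c d h hc ht
    have : c = 0 := by omega
    subst this
    have h1 : a * d = 1 := by linarith
    rcases Int.eq_one_or_neg_one_of_mul_eq_one' h1 with ⟨rfl, rfl⟩ | ⟨rfl, rfl⟩ <;>
      norm_num at ht
  | succ N ih =>
    intro a b c d h hc ht
    by_cases hlt : c.natAbs ≤ N
    · exact ih a b c d h hlt ht
    by_cases hone : c.natAbs = 1
    · rw [abs_le] at ht
      rcases Int.natAbs_eq c with e | e <;> rw [hone] at e <;> push_cast at e <;> subst e
      · have ht' : d = -a ∨ d = 1 - a ∨ d = -1 - a := by omega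
        rcases ht' with rfl | rfl | rfl
        · obtain ⟨h', hT⟩ := conjT a b 1 _ h (-a)
          obtain ⟨h'', e⟩ := mkSL_congr (h := h') (a' := 0) (b' := -1) (c' := 1) (d' := 0)
            (by ring) (by linarith) (by ring) (by ring)
          exact ⟨_, e ▸ hT, good_S _⟩
        · obtain ⟨h', hT⟩ := conjT a b 1 _ h (-a)
          obtain ⟨h'', e⟩ := mkSL_congr (h := h') (a' := 0) (b' := -1) (c' := 1) (d' := 1)
            (by ring) (by linarith) (by ring) (by ring)
          exact ⟨_, e ▸ hT, good_U _⟩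
        · obtain ⟨h', hT⟩ := conjT a b 1 _ h (-1-a)
          obtain ⟨h'', e⟩ := mkSL_congr (h := h') (a' := -1) (b' := -1) (c' := 1) (d' := 0)
            (by ring) (by linarith) (by ring) (by ring)
          exact ⟨_, e ▸ hT, good_V' _⟩
      · have ht' : d = -a ∨ d = 1 - a ∨ d = -1 - a := by omega
        rcases ht' with rfl | rfl | rfl
        · obtain ⟨h', hT⟩ := conjT a b (-1) _ h a
          obtain ⟨h'', e⟩ := mkSL_congr (h := h') (a' := 0) (b' := 1) (c' := -1) (d' := 0)
            (by ring) (by linarith) (by ring) (by ring)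
          exact ⟨_, e ▸ hT, good_S' _⟩
        · obtain ⟨h', hT⟩ := conjT a b (-1) _ h (a-1)
          obtain ⟨h'', e⟩ := mkSL_congr (h := h') (a' := 1) (b' := 1) (c' := -1) (d' := 0)
            (by ring) (by linarith) (by ring) (by ring)
          exact ⟨_, e ▸ hT, good_V _⟩
        · obtain ⟨h', hT⟩ := conjT a b (-1) _ h a
          obtain ⟨h'', e⟩ := mkSL_congr (h := h') (a' := 0) (b' := 1) (c' := -1) (d' := -1)
            (by ring) (by linarith) (by ring) (by ring)
          exact ⟨_, e ▸ hT, good_U' _⟩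
    · by_cases hc0 : c = 0
      · exact absurd (show c.natAbs ≤ N by simp [hc0]) hlt
      obtain ⟨k, hk⟩ := exists_round (a - d) c hc0
      obtain ⟨h', hT⟩ := conjT a b c d h k
      obtain ⟨h'', hS⟩ := conjS _ _ _ _ h'
      obtain ⟨B, hB, hG⟩ := ih _ _ _ _ h'' (by
        set b' := b + k * (d - a) - k ^ 2 * c with hb'
        have hc2 : 2 ≤ |c| := by rw [Int.abs_eq_natAbs]; omega
        have e4 : 4 * (b' * c) = (a + d) ^ 2 - (a - d + 2 * k * c) ^ 2 - 4 := by
          rw [hb']; linear_combination -4 * h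
        have e5 : (a - d + 2 * k * c) ^ 2 ≤ c ^ 2 := sq_le_sq.mpr hk
        have e6 : (a + d) ^ 2 ≤ 1 := by
          have := sq_le_sq.mpr (show |a + d| ≤ |(1:ℤ)| by simpa using ht)
          simpa using this
        have e7 : 4 ≤ c ^ 2 := by rw [← sq_abs]; nlinarith
        have e8 : |b' * c| < c ^ 2 := by
          rw [abs_lt]; constructor <;> nlinarith [sq_nonneg (a + d), sq_nonneg (a - d + 2 * k * c)]
        rw [abs_mul, ← sq_abs, pow_two] at e8
        have e9 : |b'| < |c| := lt_of_mul_lt_mul_right e8 (abs_nonneg c)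
        rw [Int.abs_eq_natAbs, Int.abs_eq_natAbs] at e9
        rw [Int.natAbs_neg]
        omega) (by
        have : d - k * c + (a + k * c) = a + d := by ring
        rw [this]; exact ht)
      exact ⟨B, (hT.trans hS).trans hB, hG⟩

theorem pow_form (a b c d h) (ht : 2 ≤ a + d) (k : ℕ) : ∃ p q : ℤ, 0 ≤ q ∧ q < p ∧
    ((mkSL a b c d h) ^ (k + 1)).1 = !![p * a - q, p * b; p * c, p * d - q] := by
  induction k with
  | zero =>
    refine ⟨1, 0, le_refl _, by norm_num, ?_⟩
    rw [zero_add, pow_one]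
    ext i j; fin_cases i <;> fin_cases j <;> simp [mkSL]
  | succ k ih =>
    obtain ⟨p, q, hq, hp, e⟩ := ih
    refine ⟨p * (a + d) - q, p, by omega, by nlinarith, ?_⟩
    rw [pow_succ]
    have : ((mkSL a b c d h) ^ (k + 1) * mkSL a b c d h).1 =
      ((mkSL a b c d h) ^ (k + 1)).1 * (mkSL a b c d h).1 := rfl
    rw [this, e]
    show _ * !![a, b; c, d] = _
    rw [Matrix.mul_fin_two]
    ext i j; fin_cases i <;> fin_cases j <;> simp <;> first | (ring1) | linear_combination (-p) * h

theorem not_finOrder (a b c d h) (ht : 2 ≤ a + d) (hf : IsOfFinOrder (xi (mkSL a b c d h))) :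
    xi (mkSL a b c d h) = 1 := by
  obtain ⟨n, hn, he⟩ := isOfFinOrder_iff_pow_eq_one.mp hf
  obtain ⟨k, rfl⟩ : ∃ k, n = k + 1 := ⟨n - 1, by omega⟩
  obtain ⟨p, q, hq, hp, e⟩ := pow_form a b c d h ht k
  rw [← map_pow, ← map_one xi, xi_eq_iff] at he
  have key : p * b = 0 ∧ p * c = 0 := by
    rcases he with he | he
    · rw [he] at e
      have h1 := congrFun (congrFun e 0) 1
      have h2 := congrFun (congrFun e 1) 0
      simp at h1 h2
      simp [h1, h2]
    · rw [he] at e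
      have h1 := congrFun (congrFun e 0) 1
      have h2 := congrFun (congrFun e 1) 0
      simp at h1 h2
      simp [h1, h2]
  have hp0 : p ≠ 0 := by omega
  have hb : b = 0 := by simpa [hp0] using key.1
  have hc : c = 0 := by simpa [hp0] using key.2
  subst hb hc
  have h1 : a * d = 1 := by linarith
  rcases Int.eq_one_or_neg_one_of_mul_eq_one' h1 with ⟨rfl, rfl⟩ | ⟨rfl, rfl⟩
  · rw [← map_one xi, xi_eq_iff]; left
    apply Subtype.ext; ext i j; fin_cases i <;> fin_cases j <;> rfl
  · norm_num at ht

theorem torsion_class (x : PSL2Z) (hx : x ≠ 1) (hf : IsOfFinOrder x) :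
    ∃ g : PSL2Z, g * x * g⁻¹ = Sp ∨ g * x * g⁻¹ = Up ∨ g * x * g⁻¹ = Up⁻¹ := by
  obtain ⟨A, rfl⟩ := xi_surj x
  obtain ⟨a, b, c, d, h, rfl⟩ := mkSL_surj A
  have h1 : a + d < 2 := by
    by_contra hcon
    exact hx (not_finOrder a b c d h (by omega) hf)
  have h2 : -2 < a + d := by
    by_contra hcon
    have e : mkSL (-a) (-b) (-c) (-d) (by linarith) = - mkSL a b c d h := by
      apply Subtype.ext; ext i j; fin_cases i <;> fin_cases j <;> rfl
    have := not_finOrder (-a) (-b) (-c) (-d) (by linarith) (by omega)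
      (by rw [e, xi_neg]; exact hf)
    rw [e, xi_neg] at this
    exact hx this
  obtain ⟨B, hB, hG⟩ := elliptic_conj _ a b c d h le_rfl (by rw [abs_le]; constructor <;> omega)
  obtain ⟨g, rfl⟩ := isConj_iff.mp hB
  refine ⟨xi g, ?_⟩
  simpa only [Good, map_mul, map_inv] using hG

theorem Sp_ne_one : Sp ≠ 1 := by
  rw [Sp_eq, ← map_one xi, Ne, xi_eq_iff]
  rintro (e | e)
  · have := congrArg (fun A : SL2Z => A.1 0 0) e
    revert this; decide
  · have := congrArg (fun A : SL2Z => A.1 0 0) e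
    revert this; decide

theorem Up_ne_one : Up ≠ 1 := by
  rw [Up_eq, ← map_one xi, Ne, xi_eq_iff]
  rintro (e | e)
  · have := congrArg (fun A : SL2Z => A.1 0 0) e
    revert this; decide
  · have := congrArg (fun A : SL2Z => A.1 0 0) e
    revert this; decide

theorem nFix_zero_of_torsionFree {g : PSL2Z} (hg : g ≠ 1) (hf : IsOfFinOrder g)
    (Γ : Subgroup PSL2Z) (h : TorsionFree Γ) : nFix g Γ = 0 := by
  rw [nFix, Nat.card_eq_zero]
  left
  constructor
  rintro ⟨x, hx⟩
  induction x using QuotientGroup.induction_on with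
  | H y =>
    have hm : y⁻¹ * g * y ∈ Γ := by
      have := QuotientGroup.eq.mp (show ((g * y : PSL2Z) : PSL2Z ⧸ Γ) = y from hx)
      have := Γ.inv_mem this
      simpa [mul_assoc] using this
    have hc : IsConj g (y⁻¹ * g * y) := isConj_iff.mpr ⟨y⁻¹, by simp⟩
    apply h _ hm
    · intro e
      rw [e, isConj_one_left] at hc
      exact hg hc
    · obtain ⟨n, hn, he⟩ := isOfFinOrder_iff_pow_eq_one.mp hf
      refine isOfFinOrder_iff_pow_eq_one.mpr ⟨n, hn, ?_⟩
      have := conj_pow (i := n) (a := y⁻¹) (b := g)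
      rw [inv_inv] at this
      rw [this, he]; simp

theorem fixed_of_conj {g x y : PSL2Z} {Γ : Subgroup PSL2Z} (hx : x ∈ Γ) (h : y * x * y⁻¹ = g) :
    g • (y : PSL2Z ⧸ Γ) = y := by
  subst h
  show ((y * x * y⁻¹ * y : PSL2Z) : PSL2Z ⧸ Γ) = y
  apply QuotientGroup.eq.mpr
  simpa using hx

theorem torsionFree_iff (Γ : Subgroup PSL2Z) (hi : Γ.index ≠ 0) :
    TorsionFree Γ ↔ nFix Sp Γ = 0 ∧ nFix (Sp * Tp) Γ = 0 := by
  constructor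
  · intro h
    exact ⟨nFix_zero_of_torsionFree Sp_ne_one
      (isOfFinOrder_iff_pow_eq_one.mpr ⟨2, by norm_num, Sp_sq⟩) Γ h,
      nFix_zero_of_torsionFree Up_ne_one
      (isOfFinOrder_iff_pow_eq_one.mpr ⟨3, by norm_num, Up_cube⟩) Γ h⟩
  · rintro ⟨h2, h3⟩ x hx hx1 hf
    have : Γ.FiniteIndex := ⟨hi⟩
    have : Finite (PSL2Z ⧸ Γ) := Subgroup.finite_quotient_of_finiteIndex
    have key : ∀ g, nFix g Γ = 0 → ∀ z : PSL2Z ⧸ Γ, g • z ≠ z := by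
      intro g hg z hz
      rw [nFix, Nat.card_eq_zero] at hg
      rcases hg with hg | hg
      · exact hg.false ⟨z, hz⟩
      · exact hg.not_finite inferInstance
    obtain ⟨y, hy | hy | hy⟩ := torsion_class x hx1 hf
    · exact key _ h2 _ (fixed_of_conj hx hy)
    · exact key _ h3 _ (fixed_of_conj hx hy)
    · have := fixed_of_conj hx hy
      exact key _ h3 _ (by rw [inv_smul_eq_iff] at this; exact this.symm)


/-! ### Codes of pointed actions: definitions

Functions that are evaluated by the kernel are written with explicit recursors. -/

/-- Remove the first occurrence of `q`, returning its position and the remaining list. -/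
def rm {X : Type*} (eq : X → X → Bool) (q : X) (l : List X) : Option (ℕ × List X) :=
  List.rec none (fun a l ih => Bool.rec
      (Option.rec none (fun p => some (p.1 + 1, a :: p.2)) ih) (some (0, l)) (eq a q)) l

/-- The word describing the exploration of an action from a list of open points. The
argument `fc` is a (possibly strict) application function. -/
def code {X : Type*} (eq : X → X → Bool) (fc : X → (X → List ℕ) → List ℕ) (s u : X → X)
    (f : ℕ) : List X → List ℕ :=
  Nat.rec (fun _ => []) (fun _ ih l => List.rec [3] (fun p r _ =>
    fc (s p) fun q =>
    Bool.rec
      (Option.rec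
        (fc (u q) fun uq =>
          Bool.rec (fc (u uq) fun uuq => 2 :: ih (uq :: uuq :: r)) (1 :: ih r) (eq uq q))
        (fun pr => (pr.1 + 4) :: ih pr.2)
        (rm eq q r)) (0 :: ih r) (eq q p)) l) f

def rootCode {X : Type*} (eq : X → X → Bool) (fc : X → (X → List ℕ) → List ℕ) (s u : X → X)
    (x : X) : List ℕ :=
  Bool.rec (2 :: code eq fc s u 20 [x, u x, u (u x)]) (1 :: code eq fc s u 20 [x]) (eq (u x) x)

/-- strict application -/
def fcN (n : ℕ) (k : ℕ → List ℕ) : List ℕ := Nat.rec (k 0) (fun m _ => k (m + 1)) n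
/-- plain application -/
def fcI {X : Type*} (x : X) (k : X → List ℕ) : List ℕ := k x

def tails (d : ℕ) (cs : List (List ℕ)) : List (List ℕ) :=
  List.rec [] (fun c _ ih =>
    List.rec ih (fun a t _ => Bool.rec ih (t :: ih) (Nat.beq a d)) c) cs

def hasEnd (cs : List (List ℕ)) : Bool :=
  List.rec false (fun c _ ih =>
    List.rec ih (fun a t _ => Bool.rec ih (Bool.rec ih true t.isEmpty) (Nat.beq a 3)) c) cs

def band (a b : Bool) : Bool := Bool.rec false b a

def allBelow (P : ℕ → Bool) (n : ℕ) : Bool := Nat.rec true (fun n ih => band (P n) ih) n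

def countBelow (P : ℕ → Bool) (n : ℕ) : ℕ := Nat.rec 0 (fun n ih => Bool.rec ih (ih + 1) (P n)) n

/-- All words with `k` open points and budget `b` occur in `cs`. -/
def cover (f : ℕ) : ℕ → ℕ → List (List ℕ) → Bool :=
  Nat.rec (fun _ _ _ => false) (fun _ rec k b cs =>
    Nat.rec (Nat.rec (hasEnd cs) (fun _ _ => true) b)
     (fun k _ =>
      band
        (Nat.rec true (fun b' _ => band (rec k b' (tails 0 cs)) (band (rec k b' (tails 1 cs))
          (rec (k + 2) b' (tails 2 cs)))) b)
        (allBelow (fun i => rec (k - 1) b (tails (i + 4) cs)) k)) k) f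

def coverRoot (cs : List (List ℕ)) : Bool :=
  band (cover 20 1 5 (tails 1 cs)) (cover 20 3 5 (tails 2 cs))

/-- A table: number of points, the base 32 tables of `s` and `u`, and the kind of the
subgroup (0: positive genus, 1: torsion free, 2: `e₂ > 0`, 3: `e₂ = 0, e₃ = 1`,
4: `e₂ = 0, e₃ ≥ 2`). -/
structure Tab where
  n : ℕ
  S : ℕ
  U : ℕ
  c : ℕ

def Tab.s (t : Tab) (x : ℕ) : ℕ := (t.S >>> (5 * x)) % 32
def Tab.u (t : Tab) (x : ℕ) : ℕ := (t.U >>> (5 * x)) % 32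

def Tab.code (t : Tab) (x : ℕ) : List ℕ := rootCode Nat.beq fcN t.s t.u x

def Tab.valid (t : Tab) : Bool :=
  band (Nat.ble 1 t.n) (allBelow (fun j =>
    band (Nat.ble (t.s j + 1) t.n) (band (Nat.ble (t.u j + 1) t.n)
    (band (Nat.beq (t.s (t.s j)) j) (band (Nat.beq (t.u (t.u (t.u j))) j)
    (Nat.beq j 0 || Nat.ble (t.s j + 1) j || Nat.ble (t.u j + 1) j ||
      Nat.ble (t.u (t.u j) + 1) j))))) t.n)

/-- numerical value of a word -/
def enc (l : List ℕ) : ℕ → ℕ := List.rec (fun a => a) (fun d _ ih a => ih (a * 16 + d)) l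

def Tab.key (t : Tab) : ℕ := enc (t.code 0) 0

def Tab.minimal (t : Tab) : Bool :=
  allBelow (fun j => Nat.ble t.key (enc (t.code j) 0)) t.n

/-- `j ≤ f^[i] x` for all `i < k` -/
def isMin (f : ℕ → ℕ) (j k : ℕ) : ℕ → Bool :=
  Nat.rec (fun _ => true) (fun _ ih x => band (Nat.ble j x) (ih (f x))) k

/-- number of cycles of `f` on `{0,…,n-1}`. -/
def nCyc (f : ℕ → ℕ) (n : ℕ) : ℕ := countBelow (fun j => isMin f j n j) n

def Tab.e2 (t : Tab) : ℕ := countBelow (fun j => Nat.beq (t.s j) j) t.n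
def Tab.e3 (t : Tab) : ℕ := countBelow (fun j => Nat.beq (t.u j) j) t.n
def Tab.genusZero (t : Tab) : Bool :=
  Nat.beq (nCyc t.s t.n + nCyc t.u t.n + nCyc (fun x => t.s (t.u x)) t.n) (t.n + 2)

/-- the kind of a genus zero table -/
def kind (e2 e3 : ℕ) : ℕ :=
  Nat.rec (Nat.rec 1 (fun m _ => Nat.rec 3 (fun _ _ => 4) m) e3) (fun _ _ => 2) e2

def Tab.kindOK (t : Tab) : Bool :=
  band (Nat.beq (t.n + 3 * t.e2 + 2 * t.e3) 18)
    (Nat.beq t.c (Bool.rec 0 (kind t.e2 t.e3) t.genusZero))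

def sortedKeys (l : List Tab) : ℕ → Bool :=
  List.rec (fun _ => true) (fun t _ ih a => band (Nat.ble (a + 1) t.key) (ih t.key)) l

def codesUpTo (t : Tab) (n : ℕ) : List (List ℕ) → List (List ℕ) :=
  Nat.rec (fun acc => acc) (fun n ih acc => ih (t.code n :: acc)) n

def allCodes (l : List Tab) : List (List ℕ) :=
  List.rec [] (fun t _ ih => codesUpTo t t.n ih) l

def countTabs (P : Tab → Bool) (l : List Tab) : ℕ :=
  List.rec 0 (fun t _ ih => Bool.rec ih (ih + 1) (P t)) l

def allTabs (P : Tab → Bool) (l : List Tab) : Bool :=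
  List.rec true (fun t _ ih => band (P t) ih) l

/-! ### The representatives and the kernel computations -/

def reps : List Tab := [
  ⟨7, 6613501953, 4501572672, 2⟩,
  ⟨8, 213845673985, 245019741248, 2⟩,
  ⟨8, 178479302657, 245019741248, 2⟩,
  ⟨9, 6777696552961, 9041112763456, 2⟩,
  ⟨8, 247063547905, 179520441408, 2⟩,
  ⟨9, 7978004680705, 8975613463616, 2⟩,
  ⟨10, 253205604896769, 325634962263104, 4⟩,
  ⟨7, 6612422657, 4501572672, 2⟩,
  ⟨8, 213844594689, 245019741248, 2⟩,
  ⟨6, 172035104, 106037313, 2⟩,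
  ⟨10, 291584427034625, 256465588751424, 2⟩,
  ⟨11, 10491720579024897, 9369183600020544, 2⟩,
  ⟨10, 220084026083329, 256465588751424, 2⟩,
  ⟨11, 9229482304079873, 11515464657177664, 2⟩,
  ⟨10, 291549060663297, 256465588751424, 2⟩,
  ⟨11, 7046952796686337, 11515464657177664, 2⟩,
  ⟨10, 323437045352449, 256465588751424, 2⟩,
  ⟨11, 10491720579024897, 11515464657177664, 2⟩,
  ⟨11, 10492920887152641, 9369118100720704, 2⟩,
  ⟨12, 372926074769805313, 337004891480296512, 4⟩,
  ⟨11, 8204908056711169, 9369118100720704, 2⟩,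
  ⟨12, 332534449971564545, 405685885309324352, 4⟩,
  ⟨11, 10491789163270145, 9369118100720704, 2⟩,
  ⟨12, 262693505734971393, 405685885309324352, 4⟩,
  ⟨11, 11512204673323009, 9369118100720704, 2⟩,
  ⟨12, 372926074769805313, 405685885309324352, 4⟩,
  ⟨10, 291480273129473, 256465588751424, 2⟩,
  ⟨11, 10488455262113793, 9369183600020544, 2⟩,
  ⟨10, 114563054080001, 256465588751424, 2⟩,
  ⟨11, 9123961332076545, 11515464657177664, 2⟩,
  ⟨10, 291584425955329, 256465588751424, 2⟩,
  ⟨10, 320171728441345, 256465588751424, 2⟩,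
  ⟨11, 10488455262113793, 11515464657177664, 2⟩,
  ⟨12, 328030678679883777, 405685950808624192, 4⟩,
  ⟨11, 10491720577945601, 9369183600020544, 2⟩,
  ⟨11, 11371329880363009, 9369183600020544, 2⟩,
  ⟨12, 372785199976845313, 405685950808624192, 4⟩,
  ⟨10, 325630698917889, 256465588751424, 2⟩,
  ⟨11, 10493914232590337, 11515464657177664, 2⟩,
  ⟨10, 220084025004033, 256465588751424, 2⟩,
  ⟨10, 114527687708673, 256465588751424, 2⟩,
  ⟨11, 6869931423731713, 11515464657177664, 2⟩,
  ⟨10, 291549059584001, 256465588751424, 2⟩,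
  ⟨10, 323437044273153, 256465588751424, 2⟩,
  ⟨11, 10491720577945601, 11515464657177664, 2⟩,
  ⟨10, 320136362070017, 256465588751424, 2⟩,
  ⟨10, 325564093403137, 256465588751424, 2⟩,
  ⟨10, 325669219373057, 256465588751424, 2⟩,
  ⟨9, 7977033600032, 6879569903681, 2⟩,
  ⟨9, 5742646070304, 6879569903681, 2⟩,
  ⟨9, 7975928400928, 6879569903681, 2⟩,
  ⟨9, 8972427922464, 6879569903681, 2⟩,
  ⟨9, 2445115695200, 6879569903681, 2⟩,
  ⟨9, 8870386768992, 6879569903681, 2⟩,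
  ⟨13, 13123711597206964225, 11974201974860057664, 2⟩,
  ⟨13, 7251193608197507073, 11974201974860057664, 0⟩,
  ⟨13, 10601906914259503105, 11974201974860057664, 2⟩,
  ⟨13, 13121529067699570689, 11974201974860057664, 2⟩,
  ⟨13, 13124973835481909249, 11974201974860057664, 2⟩,
  ⟨14, 458042371778889814017, 421258063863827434560, 4⟩,
  ⟨14, 270121796130587185153, 421258063863827434560, 0⟩,
  ⟨14, 377344621924571058177, 421258063863827434560, 4⟩,
  ⟨14, 457972530834653220865, 421258063863827434560, 4⟩,
  ⟨14, 458082763403688054785, 421258063863827434560, 4⟩,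
  ⟨13, 13123606076234960897, 11974201974860057664, 2⟩,
  ⟨13, 3792429123300102145, 11974201974860057664, 0⟩,
  ⟨13, 10493820553199456257, 11974201974860057664, 2⟩,
  ⟨13, 13118151399049596929, 11974201974860057664, 2⟩,
  ⟨13, 13124970570164998145, 11974201974860057664, 2⟩,
  ⟨14, 458037868007598133249, 421258063929326734400, 4⟩,
  ⟨14, 122547843266167345153, 421258063929326734400, 0⟩,
  ⟨14, 372732935665759948801, 421258063929326734400, 4⟩,
  ⟨14, 457828415440553349121, 421258063929326734400, 4⟩,
  ⟨14, 458082622528895094785, 421258063929326734400, 4⟩,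
  ⟨13, 13124976029135474689, 11974201974860057664, 2⟩,
  ⟨13, 3685431218757046273, 11974201974860057664, 0⟩,
  ⟨13, 7036109342594404353, 11974201974860057664, 2⟩,
  ⟨13, 13118079898648645633, 11974201974860057664, 2⟩,
  ⟨13, 13121352046326616065, 11974201974860057664, 2⟩,
  ⟨14, 458043501899810017281, 421260210210383891520, 4⟩,
  ⟨14, 117931658050454065153, 421260210210383891520, 0⟩,
  ⟨14, 225153357979964542977, 421260210210383891520, 4⟩,
  ⟨14, 457827153202278404097, 421260210210383891520, 4⟩,
  ⟨13, 10782050890763407361, 11974201974860057664, 2⟩,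
  ⟨13, 7322969727257841665, 11974201974860057664, 0⟩,
  ⟨13, 3864310763332440065, 11974201974860057664, 2⟩,
  ⟨14, 416682478106411470849, 491589547891308399680, 4⟩,
  ⟨14, 413223396942905905153, 491589547891308399680, 0⟩,
  ⟨13, 13123817143879798785, 11974201974860057664, 2⟩,
  ⟨13, 13123711597205884929, 11974201974860057664, 2⟩,
  ⟨13, 13123606040868589569, 11974201974860057664, 2⟩,
  ⟨14, 234484534932899401729, 491589547891308399680, 4⟩,
  ⟨13, 14168722626173931521, 11974201974860057664, 2⟩,
  ⟨14, 458043501899810017281, 491589547891308399680, 4⟩,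
  ⟨13, 7251193608196427777, 11974201974860057664, 0⟩,
  ⟨13, 3792429087933730817, 11974201974860057664, 0⟩,
  ⟨14, 225153357979964542977, 491589547891308399680, 0⟩,
  ⟨13, 14060354768730361857, 11974201974860057664, 0⟩,
  ⟨13, 10601906914258423809, 11974201974860057664, 2⟩,
  ⟨13, 3684272333501370369, 11974201974860057664, 0⟩,
  ⟨13, 13952373928642318337, 11974201974860057664, 2⟩,
  ⟨14, 457827153202278404097, 491589547891308399680, 4⟩,
  ⟨13, 10493820517833084929, 11974201974860057664, 2⟩,
  ⟨14, 231854749409863897089, 491589547891308399680, 4⟩,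
  ⟨13, 7034950457338728449, 11974201974860057664, 2⟩,
  ⟨14, 339076484521599012865, 491589547891308399680, 4⟩,
  ⟨13, 13118151363683225601, 11974201974860057664, 2⟩,
  ⟨14, 457824970672771010561, 421260210210383891520, 4⟩,
  ⟨13, 3862128233825046529, 11974201974860057664, 2⟩,
  ⟨13, 13121529067698491393, 11974201974860057664, 2⟩,
  ⟨13, 13950191399134924801, 11974201974860057664, 2⟩,
  ⟨14, 457824970672771010561, 491589547891308399680, 4⟩,
  ⟨13, 13118183251667914753, 11974201974860057664, 2⟩,
  ⟨14, 457828415440553349121, 421260210210383891520, 4⟩,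
  ⟨13, 3865573001607385089, 11974201974860057664, 0⟩,
  ⟨13, 13124973835480829953, 11974201974860057664, 2⟩,
  ⟨13, 13953636166917263361, 11974201974860057664, 0⟩,
  ⟨14, 457828415440553349121, 491589547891308399680, 0⟩,
  ⟨13, 13121557655000977409, 11974201974860057664, 2⟩,
  ⟨13, 7324334221187878913, 11974201974860057664, 2⟩,
  ⟨13, 13124970534798626817, 11974201974860057664, 2⟩,
  ⟨13, 14061719262660399105, 11974201974860057664, 2⟩,
  ⟨14, 457936498536296484865, 491589547891308399680, 4⟩,
  ⟨13, 13124975962529959937, 11974201974860057664, 2⟩,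
  ⟨14, 458043501833204502529, 421260210210383891520, 4⟩,
  ⟨13, 10782050824157892609, 11974201974860057664, 2⟩,
  ⟨13, 13123817077274284033, 11974201974860057664, 2⟩,
  ⟨13, 14168722559568416769, 11974201974860057664, 2⟩,
  ⟨14, 458043501833204502529, 491589547891308399680, 4⟩,
  ⟨13, 13124976067655929857, 11974201974860057664, 2⟩,
  ⟨13, 10782050929283862529, 11974201974860057664, 2⟩,
  ⟨13, 13123817182400253953, 11974201974860057664, 2⟩,
  ⟨13, 14168722664694386689, 11974201974860057664, 2⟩,
  ⟨14, 458043501938330472449, 491589547891308399680, 4⟩,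
  ⟨12, 372924971135077408, 337002795436736577, 2⟩,
  ⟨12, 189408783978531872, 337002795436736577, 0⟩,
  ⟨12, 294118574792969248, 337002795436736577, 2⟩,
  ⟨12, 372856767087971360, 337002795436736577, 2⟩,
  ⟨12, 372964416081169440, 337002795436736577, 2⟩,
  ⟨12, 372921673604702304, 337002795436736577, 2⟩,
  ⟨12, 81322393825487968, 337002795436736577, 0⟩,
  ⟨12, 290740876009842784, 337002795436736577, 2⟩,
  ⟨12, 372751214942659680, 337002795436736577, 2⟩,
  ⟨12, 372964314040015968, 337002795436736577, 2⟩,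
  ⟨12, 372964484632843360, 337002795436736577, 2⟩,
  ⟨12, 77978709308517472, 337002795436736577, 0⟩,
  ⟨12, 182687400678434912, 337002795436736577, 2⟩,
  ⟨12, 372748980555129952, 337002795436736577, 2⟩,
  ⟨12, 299748074058716256, 337002795436736577, 2⟩,
  ⟨12, 191651787699167328, 337002795436736577, 0⟩,
  ⟨12, 372921672499503200, 337002795436736577, 2⟩,
  ⟨12, 405581565790295136, 337002795436736577, 2⟩,
  ⟨12, 81322392720288864, 337002795436736577, 0⟩,
  ⟨12, 398820668992432224, 337002795436736577, 2⟩,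
  ⟨12, 290740874904643680, 337002795436736577, 2⟩,
  ⟨12, 182651185514195040, 337002795436736577, 2⟩,
  ⟨12, 372751213837460576, 337002795436736577, 2⟩,
  ⟨12, 398752464945326176, 337002795436736577, 2⟩,
  ⟨12, 372752210336982112, 337002795436736577, 2⟩,
  ⟨12, 398860113938524256, 337002795436736577, 0⟩,
  ⟨12, 402237710680497248, 337002795436736577, 2⟩,
  ⟨12, 372964482551421024, 337002795436736577, 2⟩,
  ⟨12, 405581563708872800, 337002795436736577, 2⟩,
  ⟨12, 405581566994059360, 337002795436736577, 2⟩,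
  ⟨16, 547030602870267844956161, 509363471565242999278656, 3⟩,
  ⟨16, 547027143789104339390465, 509363471565242999278656, 0⟩,
  ⟨16, 547023685130140413988865, 509363471565242999278656, 3⟩,
  ⟨16, 354599933406405952999425, 509363471565242999278656, 0⟩,
  ⟨16, 241263137395334887804929, 509363471565242999278656, 0⟩,
  ⟨16, 127926341912010076688385, 509363471565242999278656, 0⟩,
  ⟨16, 464396107019445438976001, 509363471565242999278656, 3⟩,
  ⟨16, 237708680783660071653377, 509363471565242999278656, 0⟩,
  ⟨16, 124375343959299185938433, 509363471565242999278656, 0⟩,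
  ⟨16, 460854331770276923346945, 509363471565242999278656, 0⟩,
  ⟨16, 347503701545562621218817, 509363471565242999278656, 0⟩,
  ⟨16, 120837027791294175875073, 509363471565242999278656, 0⟩,
  ⟨16, 457312557013672437157889, 509363471565242999278656, 3⟩,
  ⟨16, 343965385447922060431361, 509363471565242999278656, 0⟩,
  ⟨16, 230632048518014500802561, 509363471565242999278656, 3⟩,
  ⟨16, 546959085743369573568513, 509363471565242999278656, 3⟩,
  ⟨16, 120765510664395904487425, 509363471565242999278656, 0⟩,
  ⟨16, 230560531391116229414913, 509363471565242999278656, 3⟩,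
  ⟨16, 546737724568200897007617, 509363471565242999278656, 3⟩,
  ⟨16, 546848404927094332887041, 509363471565242999278656, 3⟩,
  ⟨16, 547071963894061243502593, 509363471565242999278656, 3⟩,
  ⟨16, 120878388815087574421505, 509363471565242999278656, 0⟩,
  ⟨16, 230673409541807899348993, 509363471565242999278656, 0⟩,
  ⟨16, 546731852050211887550465, 509363471565242999278656, 0⟩,
  ⟨16, 546839073750141398028289, 509363471565242999278656, 0⟩,
  ⟨16, 547071855526203799932929, 509363471565242999278656, 0⟩,
  ⟨16, 124420055696398646480897, 509363471565242999278656, 0⟩,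
  ⟨16, 344010097185021520973825, 509363471565242999278656, 0⟩,
  ⟨16, 546735202763517949546497, 509363471565242999278656, 3⟩,
  ⟨16, 546949646198559195140097, 509363471565242999278656, 0⟩,
  ⟨16, 547071747545363711889409, 509363471565242999278656, 3⟩,
  ⟨16, 237756743198883369553921, 509363471565242999278656, 0⟩,
  ⟨16, 347551763960785919119361, 509363471565242999278656, 3⟩,
  ⟨16, 546845775141571297382401, 509363471565242999278656, 3⟩,
  ⟨16, 546952996876683032498177, 509363471565242999278656, 3⟩,
  ⟨16, 547023682947610906595329, 509363471565242999278656, 3⟩,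
  ⟨16, 127926339729480569294849, 509363471565242999278656, 0⟩,
  ⟨16, 457312554831142929764353, 509363471565242999278656, 3⟩,
  ⟨16, 546737722385671389614081, 509363471565242999278656, 3⟩,
  ⟨16, 547071745362834204495873, 509363471565242999278656, 3⟩,
  ⟨16, 547023686392378688933889, 509363471565242999278656, 0⟩,
  ⟨16, 127926343174248351633409, 509363471565242999278656, 0⟩,
  ⟨16, 457312558275910712102913, 509363471565242999278656, 0⟩,
  ⟨16, 546737725830439171952641, 509363471565242999278656, 3⟩,
  ⟨16, 547071748807601986834433, 509363471565242999278656, 0⟩,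
  ⟨16, 547027145153598269427713, 509363471565242999278656, 3⟩,
  ⟨16, 241263138759828817842177, 509363471565242999278656, 0⟩,
  ⟨16, 460854333134770853384193, 509363471565242999278656, 3⟩,
  ⟨16, 546848406291588262924289, 509363471565242999278656, 3⟩,
  ⟨16, 547071856890697729970177, 509363471565242999278656, 3⟩,
  ⟨16, 547030602870201239441409, 509363471565242999278656, 3⟩,
  ⟨16, 354599933406339347484673, 509363471565242999278656, 0⟩,
  ⟨16, 464396107019378833461249, 509363471565242999278656, 3⟩,
  ⟨16, 546959085743302968053761, 509363471565242999278656, 3⟩,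
  ⟨16, 547071963893994637987841, 509363471565242999278656, 3⟩,
  ⟨16, 547030602870306365411329, 509363471565242999278656, 3⟩,
  ⟨16, 354599933406444473454593, 509363471565242999278656, 0⟩,
  ⟨16, 464396107019483959431169, 509363471565242999278656, 3⟩,
  ⟨16, 546959085743408094023681, 509363471565242999278656, 3⟩,
  ⟨16, 547071963894099763957761, 509363471565242999278656, 3⟩,
  ⟨15, 15876031118310155261024, 14698933265028128833601, 2⟩,
  ⟨15, 15875923022023795712096, 14698933265028128833601, 0⟩,
  ⟨15, 15875814938931173043296, 14698933265028128833601, 2⟩,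
  ⟨15, 9862572697564471137376, 14698933265028128833601, 0⟩,
  ⟨15, 6320797822218500350048, 14698933265028128833601, 0⟩,
  ⟨15, 2779022963364600002656, 14698933265028128833601, 0⟩,
  ⟨15, 13293703122971955074144, 14698933265028128833601, 2⟩,
  ⟨15, 6209721053103662345312, 14698933265028128833601, 0⟩,
  ⟨15, 2668054277342384666720, 14698933265028128833601, 0⟩,
  ⟨15, 13183022646435438960736, 14698933265028128833601, 0⟩,
  ⟨15, 9640815451913117019232, 14698933265028128833601, 0⟩,
  ⟨15, 2557481897092228102240, 14698933265028128833601, 0⟩,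
  ⟨15, 13072342185291548767328, 14698933265028128833601, 2⟩,
  ⟨15, 9530243073861849494624, 14698933265028128833601, 0⟩,
  ⟨15, 5988576294802238256224, 14698933265028128833601, 2⟩,
  ⟨15, 15873796208094584280160, 14698933265028128833601, 2⟩,
  ⟨15, 2555246986876657121376, 14698933265028128833601, 0⟩,
  ⟨15, 5986341384586667275360, 14698933265028128833601, 2⟩,
  ⟨15, 15866878671370563137632, 14698933265028128833601, 2⟩,
  ⟨15, 15870337432585983008864, 14698933265028128833601, 2⟩,
  ⟨15, 15877323650303698965600, 14698933265028128833601, 2⟩,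
  ⟨15, 2558774429085771806816, 14698933265028128833601, 0⟩,
  ⟨15, 5989868826795781960800, 14698933265028128833601, 0⟩,
  ⟨15, 15866695155183406592096, 14698933265028128833601, 0⟩,
  ⟨15, 15870045833306203794528, 14698933265028128833601, 0⟩,
  ⟨15, 15877320263808153854048, 14698933265028128833601, 0⟩,
  ⟨15, 2669451519126742808672, 14698933265028128833601, 0⟩,
  ⟨15, 9531640315646207636576, 14698933265028128833601, 0⟩,
  ⟨15, 15866799864974221029472, 14698933265028128833601, 2⟩,
  ⟨15, 15873501222319259954272, 14698933265028128833601, 0⟩,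
  ⟨15, 15877316889406901102688, 14698933265028128833601, 2⟩,
  ⟨15, 6211223003579390404704, 14698933265028128833601, 0⟩,
  ⟨15, 9642317402388845078624, 14698933265028128833601, 2⟩,
  ⟨15, 15870255251788388149344, 14698933265028128833601, 2⟩,
  ⟨15, 15873605931010629871712, 14698933265028128833601, 2⟩,
  ⟨15, 15875814870727125937248, 14698933265028128833601, 2⟩,
  ⟨15, 2779022895160552896608, 14698933265028128833601, 0⟩,
  ⟨15, 13072342117087501661280, 14698933265028128833601, 2⟩,
  ⟨15, 15866878603166516031584, 14698933265028128833601, 2⟩,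
  ⟨15, 15877316821202853996640, 14698933265028128833601, 2⟩,
  ⟨15, 15875814978376119135328, 14698933265028128833601, 0⟩,
  ⟨15, 2779023002809546094688, 14698933265028128833601, 0⟩,
  ⟨15, 13072342224736494859360, 14698933265028128833601, 0⟩,
  ⟨15, 15866878710815509229664, 14698933265028128833601, 2⟩,
  ⟨15, 15877316928851847194720, 14698933265028128833601, 0⟩,
  ⟨15, 15875923064664231025760, 14698933265028128833601, 2⟩,
  ⟨15, 6320797864858935663712, 14698933265028128833601, 0⟩,
  ⟨15, 13183022689075874274400, 14698933265028128833601, 2⟩,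
  ⟨15, 15870337475226418322528, 14698933265028128833601, 2⟩,
  ⟨15, 15877320306448589167712, 14698933265028128833601, 2⟩,
  ⟨15, 15876031118308073838688, 14698933265028128833601, 2⟩,
  ⟨15, 9862572697562389715040, 14698933265028128833601, 0⟩,
  ⟨15, 13293703122969873651808, 14698933265028128833601, 2⟩,
  ⟨15, 15873796208092502857824, 14698933265028128833601, 2⟩,
  ⟨15, 15877323650301617543264, 14698933265028128833601, 2⟩,
  ⟨15, 15876031118311359025248, 14698933265028128833601, 2⟩,
  ⟨15, 9862572697565674901600, 14698933265028128833601, 0⟩,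
  ⟨15, 13293703122973158838368, 14698933265028128833601, 2⟩,
  ⟨15, 15873796208095788044384, 14698933265028128833601, 2⟩,
  ⟨15, 15877323650304902729824, 14698933265028128833601, 2⟩,
  ⟨18, 640026436647888484518855747, 601455294191543042545156161, 1⟩,
  ⟨18, 640026436647884086271022339, 601455294191543042545156161, 0⟩,
  ⟨18, 640026436647885185749098659, 601455294191543042545156161, 1⟩,
  ⟨18, 640022894548777054819583043, 601455294191543042545156161, 0⟩,
  ⟨18, 640022894404661866441741667, 601455294191543042545156161, 0⟩,
  ⟨18, 640022894440690663427157155, 601455294191543042545156161, 0⟩,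
  ⟨18, 640019352881997995208344643, 601455294191543042545156161, 1⟩,
  ⟨18, 640019352629786520470954339, 601455294191543042545156161, 0⟩,
  ⟨18, 640019352665814217978293507, 601455294191543042545156161, 0⟩,
  ⟨18, 640014630515515125160482243, 601455294191543042545156161, 0⟩,
  ⟨18, 640014630407418838800933315, 601455294191543042545156161, 0⟩,
  ⟨18, 640014630299335746178264515, 601455294191543042545156161, 0⟩,
  ⟨18, 640015811107135842538240163, 601455294191543042545156161, 1⟩,
  ⟨18, 640015810999038456700614915, 601455294191543042545156161, 0⟩,
  ⟨18, 640015810854927666570606947, 601455294191543042545156161, 1⟩,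
  ⟨18, 442977431116889508907324675, 601455294191543042545156161, 0⟩,
  ⟨18, 442977431116890608385400995, 601455294191543042545156161, 0⟩,
  ⟨18, 326920552001557136395994179, 601455294191543042545156161, 0⟩,
  ⟨18, 326920551857441948018152803, 601455294191543042545156161, 0⟩,
  ⟨18, 326920551893470745003568291, 601455294191543042545156161, 0⟩,
  ⟨18, 210863673426632529812653123, 601455294191543042545156161, 0⟩,
  ⟨18, 210863673174421055075262819, 601455294191543042545156161, 0⟩,
  ⟨18, 210863673210448752582601987, 601455294191543042545156161, 0⟩,
  ⟨18, 56121168515959994946950691, 601455294191543042545156161, 0⟩,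
  ⟨18, 56121168407863708587401763, 601455294191543042545156161, 0⟩,
  ⟨18, 56121168299780615964732963, 601455294191543042545156161, 0⟩,
  ⟨18, 94806794743628128504005795, 601455294191543042545156161, 0⟩,
  ⟨18, 94806794491419952536372579, 601455294191543042545156161, 0⟩,
  ⟨18, 555408712896643042025414819, 601455294191543042545156161, 1⟩,
  ⟨18, 323277246656339971986700451, 601455294191543042545156161, 0⟩,
  ⟨18, 207219187381698361666052547, 601455294191543042545156161, 0⟩,
  ⟨18, 207220367973317979565734147, 601455294191543042545156161, 0⟩,
  ⟨18, 52481404837508696848212515, 601455294191543042545156161, 0⟩,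
  ⟨18, 52477863062649842947865123, 601455294191543042545156161, 0⟩,
  ⟨18, 91170572840052176376054947, 601455294191543042545156161, 0⟩,
  ⟨18, 91167031065175730927191299, 601455294191543042545156161, 0⟩,
  ⟨18, 91162308698697259127162307, 601455294191543042545156161, 0⟩,
  ⟨18, 551781934933411389398592675, 601455294191543042545156161, 0⟩,
  ⟨18, 435710889691390335411815491, 601455294191543042545156161, 0⟩,
  ⟨18, 203593589974058629431572835, 601455294191543042545156161, 0⟩,
  ⟨18, 48854626874277044221390371, 601455294191543042545156161, 0⟩,
  ⟨18, 48851085207501282943711779, 601455294191543042545156161, 0⟩,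
  ⟨18, 87540253065916380793029987, 601455294191543042545156161, 0⟩,
  ⟨18, 87535530843548699123008963, 601455294191543042545156161, 0⟩,
  ⟨18, 316023691198220242157320547, 601455294191543042545156161, 0⟩,
  ⟨18, 544528380231890898906005667, 601455294191543042545156161, 1⟩,
  ⟨18, 544528379979682722938372451, 601455294191543042545156161, 1⟩,
  ⟨18, 312400455514238506800005475, 601455294191543042545156161, 0⟩,
  ⟨18, 639953203109944654617904195, 601455294191543042545156161, 1⟩,
  ⟨18, 639953203109940256370070787, 601455294191543042545156161, 0⟩,
  ⟨18, 639953203109941355848147107, 601455294191543042545156161, 1⟩,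
  ⟨18, 203530982229075617478870083, 601455294191543042545156161, 0⟩,
  ⟨18, 315961083453237230204617795, 601455294191543042545156161, 1⟩,
  ⟨18, 45161699859543802396025379, 601455294191543042545156161, 0⟩,
  ⟨18, 311125380174778713036035587, 601455294191543042545156161, 0⟩,
  ⟨18, 639575413539120100736505315, 601455294191543042545156161, 1⟩,
  ⟨18, 639839865954078808160076867, 601455294191543042545156161, 1⟩,
  ⟨18, 639839865809963619782235491, 601455294191543042545156161, 0⟩,
  ⟨18, 639839865845992416767650979, 601455294191543042545156161, 1⟩,
  ⟨18, 45048362595594863315529251, 601455294191543042545156161, 0⟩,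
  ⟨18, 194955164227808881012649475, 601455294191543042545156161, 1⟩,
  ⟨18, 639575413322940721754287587, 601455294191543042545156161, 1⟩,
  ⟨18, 639726529050388152589495555, 601455294191543042545156161, 1⟩,
  ⟨18, 640068790336248526382568707, 601455294191543042545156161, 0⟩,
  ⟨18, 640068790336249625860645027, 601455294191543042545156161, 1⟩,
  ⟨18, 45277287085852072408523299, 601455294191543042545156161, 0⟩,
  ⟨18, 311240967401086983048533507, 601455294191543042545156161, 0⟩,
  ⟨18, 639830310828879002864714819, 601455294191543042545156161, 0⟩,
  ⟨18, 639825588462396132816852419, 601455294191543042545156161, 0⟩,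
  ⟨18, 194942067435833314439608835, 601455294191543042545156161, 0⟩,
  ⟨18, 639713432258412586016454915, 601455294191543042545156161, 0⟩,
  ⟨18, 640068457862514033630917987, 601455294191543042545156161, 1⟩,
  ⟨18, 435759994924114549802022051, 601455294191543042545156161, 1⟩,
  ⟨18, 640019350647087779637363779, 601455294191543042545156161, 1⟩,
  ⟨18, 640014628280604909589501379, 601455294191543042545156161, 0⟩,
  ⟨18, 639726527031661714248565827, 601455294191543042545156161, 1⟩,
  ⟨18, 639575411304209885165524451, 601455294191543042545156161, 1⟩,
  ⟨18, 640068415527548338040742307, 601455294191543042545156161, 1⟩,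
  ⟨18, 56121169808491988490655267, 601455294191543042545156161, 0⟩,
  ⟨18, 639575414831652094280209891, 601455294191543042545156161, 1⟩,
  ⟨18, 195138194324457603400215043, 601455294191543042545156161, 1⟩]

theorem chk_valid : allTabs Tab.valid reps = true := by decide +kernel
theorem chk_kind : allTabs Tab.kindOK reps = true := by decide +kernel
theorem chk_sorted : sortedKeys reps 0 = true := by decide +kernel
theorem chk_count : countTabs (fun t => !(Nat.beq t.c 0)) reps = 232 ∧
    countTabs (fun t => Nat.beq t.c 1) reps = 26 ∧ countTabs (fun t => Nat.beq t.c 2) reps = 143 ∧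
    countTabs (fun t => Nat.beq t.c 3) reps = 32 ∧ countTabs (fun t => Nat.beq t.c 4) reps = 31 := by
  decide +kernel
theorem chk_min : allTabs Tab.minimal reps = true := by decide +kernel
theorem chk_cover : coverRoot (allCodes reps) = true := by decide +kernel


/-! ### Theory of codes -/

open Classical in
/-- decidable equality as a Boolean function -/
noncomputable def deq {X : Type*} (a b : X) : Bool := decide (a = b)

theorem deq_true {X : Type*} {a b : X} (h : a = b) : deq a b = true := by simp [deq, h]
theorem deq_false {X : Type*} {a b : X} (h : a ≠ b) : deq a b = false := by simp [deq, h]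

theorem natBeq_eq : Nat.beq = deq := by
  funext a b
  by_cases h : a = b
  · rw [deq_true h, h]; exact Nat.beq_refl b
  · rw [deq_false h]
    by_contra h2
    exact h (Nat.eq_of_beq_eq_true (by simpa using h2))

theorem fcN_eq : fcN = fcI := by
  funext a k
  cases a <;> rfl

/-- the code with classical equality -/
noncomputable def cd {X : Type*} (s u : X → X) (f : ℕ) (l : List X) : List ℕ :=
  code deq fcI s u f l

noncomputable def rcd {X : Type*} (s u : X → X) (x : X) : List ℕ := rootCode deq fcI s u x

theorem Tab.code_eq (t : Tab) (x : ℕ) : t.code x = rcd t.s t.u x := by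
  unfold Tab.code rcd
  rw [natBeq_eq, fcN_eq]

theorem rm_cons {X : Type*} (eq : X → X → Bool) (q a : X) (l : List X) :
    rm eq q (a :: l) = Bool.rec
      (Option.rec none (fun p => some (p.1 + 1, a :: p.2)) (rm eq q l)) (some (0, l)) (eq a q) := rfl

theorem rm_none {X : Type*} (q : X) : ∀ l : List X, rm deq q l = none → q ∉ l
  | [], _ => by simp
  | a :: l, h => by
    rw [rm_cons] at h
    by_cases hq : a = q
    · rw [deq_true hq] at h; simp at h
    · rw [deq_false hq] at h
      simp only at h
      have := rm_none q l
      cases hl : rm deq q l with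
      | none => simp [this hl, Ne.symm hq]
      | some p => rw [hl] at h; simp at h

theorem rm_some {X : Type*} (q : X) : ∀ (l : List X) (i : ℕ) (l' : List X),
    rm deq q l = some (i, l') → l[i]? = some q ∧ l' = l.eraseIdx i
  | [], i, l', h => by simp [rm] at h
  | a :: l, i, l', h => by
    rw [rm_cons] at h
    by_cases hq : a = q
    · rw [deq_true hq] at h
      simp only [Option.some.injEq, Prod.mk.injEq] at h
      obtain ⟨rfl, rfl⟩ := h
      simp [hq]
    · rw [deq_false hq] at h
      simp only at h
      cases hl : rm deq q l with
      | none => rw [hl] at h; simp at h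
      | some p =>
        rw [hl] at h
        simp only [Option.some.injEq, Prod.mk.injEq] at h
        obtain ⟨rfl, rfl⟩ := h
        have := rm_some q l p.1 p.2 hl
        simp [this.1, ← this.2]

theorem perm_eraseIdx {X : Type*} {q : X} : ∀ {l : List X} {i : ℕ}, l[i]? = some q →
    l.Perm (q :: l.eraseIdx i)
  | [], i, h => by simp at h
  | a :: l, 0, h => by simp at h; simp [h]
  | a :: l, i + 1, h => by
    simp only [List.getElem?_cons_succ] at h
    have := perm_eraseIdx h
    simp only [List.eraseIdx_cons_succ]
    exact (this.cons a).trans (List.Perm.swap _ _ _)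

section
variable {X : Type*} (s u : X → X)

theorem cd_zero (l : List X) : cd s u 0 l = [] := rfl
theorem cd_nil (f : ℕ) : cd s u (f + 1) [] = [3] := rfl
theorem cd_cons (f : ℕ) (p : X) (r : List X) : cd s u (f + 1) (p :: r) =
    Bool.rec
      (Option.rec
        (Bool.rec (2 :: cd s u f (u (s p) :: u (u (s p)) :: r)) (1 :: cd s u f r)
            (deq (u (s p)) (s p)))
        (fun pr => (pr.1 + 4) :: cd s u f pr.2)
        (rm deq (s p) r)) (0 :: cd s u f r) (deq (s p) p) := rfl

theorem cd_cases (f : ℕ) (p : X) (r : List X) :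
    (s p = p ∧ cd s u (f + 1) (p :: r) = 0 :: cd s u f r) ∨
    (∃ i, s p ≠ p ∧ r[i]? = some (s p) ∧ rm deq (s p) r = some (i, r.eraseIdx i) ∧
      cd s u (f + 1) (p :: r) = (i + 4) :: cd s u f (r.eraseIdx i)) ∨
    (s p ≠ p ∧ s p ∉ r ∧ rm deq (s p) r = none ∧ u (s p) = s p ∧
      cd s u (f + 1) (p :: r) = 1 :: cd s u f r) ∨
    (s p ≠ p ∧ s p ∉ r ∧ rm deq (s p) r = none ∧ u (s p) ≠ s p ∧
      cd s u (f + 1) (p :: r) = 2 :: cd s u f (u (s p) :: u (u (s p)) :: r)) := by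
  rw [cd_cons]
  by_cases h : s p = p
  · left; rw [deq_true h]; exact ⟨h, rfl⟩
  right
  rw [deq_false h]
  cases hr : rm deq (s p) r with
  | some pr =>
    left
    obtain ⟨h1, h2⟩ := rm_some _ _ pr.1 pr.2 hr
    refine ⟨pr.1, h, h1, ?_, ?_⟩
    · rw [← h2]
    · simp only; rw [← h2]
  | none =>
    right
    have hn := rm_none _ _ hr
    by_cases h2 : u (s p) = s p
    · left; rw [deq_true h2]; exact ⟨h, hn, rfl, h2, rfl⟩
    · right; rw [deq_false h2]; exact ⟨h, hn, rfl, h2, rfl⟩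

theorem rcd_eq (x : X) : rcd s u x =
    Bool.rec (2 :: cd s u 20 [x, u x, u (u x)]) (1 :: cd s u 20 [x]) (deq (u x) x) := rfl

theorem rcd_cases (x : X) :
    (u x = x ∧ rcd s u x = 1 :: cd s u 20 [x]) ∨
    (u x ≠ x ∧ rcd s u x = 2 :: cd s u 20 [x, u x, u (u x)]) := by
  unfold rcd rootCode
  by_cases h : u x = x
  · left; rw [deq_true h]; exact ⟨h, rfl⟩
  · right; rw [deq_false h]; exact ⟨h, rfl⟩

/-- The invariant of the exploration: `D` the visited points, `o` the open points. -/
structure XInv (D : Set X) (o : List X) : Prop where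
  nd : o.Nodup
  sub : ∀ x ∈ o, x ∈ D
  uc : ∀ x ∈ D, u x ∈ D
  sc : ∀ x ∈ D, x ∉ o → s x ∈ D ∧ s x ∉ o

variable {s u}

theorem XInv.fix {D : Set X} {p : X} {r : List X} (h : XInv s u D (p :: r)) (hp : s p = p) :
    XInv s u D r := by
  obtain ⟨nd, sub, uc, sc⟩ := h
  simp only [List.nodup_cons, List.mem_cons, not_or] at *
  refine ⟨nd.2, fun x hx => sub x (Or.inr hx), uc, fun x hx hxr => ?_⟩
  by_cases hxp : x = p
  · subst hxp; rw [hp]; exact ⟨hx, hxr⟩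
  · have := sc x hx ⟨hxp, hxr⟩
    exact ⟨this.1, this.2.2⟩

theorem XInv.pair (hs : ∀ x, s (s x) = x) {D : Set X} {p : X} {r l' : List X}
    (h : XInv s u D (p :: r)) (hp : r.Perm (s p :: l')) : XInv s u D l' := by
  obtain ⟨nd, sub, uc, sc⟩ := h
  have nd2 := (hp.cons p).nodup_iff.1 nd
  have hm : ∀ x, x ∈ r ↔ x = s p ∨ x ∈ l' := fun x => by rw [hp.mem_iff]; simp
  simp only [List.nodup_cons, List.mem_cons, not_or, hm] at *
  refine ⟨nd2.2.2, fun x hx => sub x (Or.inr (Or.inr hx)), uc, fun x hx hxr => ?_⟩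
  by_cases hxp : x = p
  · subst hxp; exact ⟨sub _ (Or.inr (Or.inl rfl)), nd2.2.1⟩
  by_cases hxq : x = s p
  · subst hxq; rw [hs]; exact ⟨sub _ (Or.inl rfl), nd2.1.2⟩
  have := sc x hx ⟨hxp, hxq, hxr⟩
  exact ⟨this.1, this.2.2.2⟩

theorem XInv.new (hs : ∀ x, s (s x) = x) {D : Set X} {p : X} {r : List X}
    (h : XInv s u D (p :: r)) (h1 : s p ≠ p) (h2 : s p ∉ r) : s p ∉ D := by
  intro hD
  have := (h.sc (s p) hD (by simp [h1, h2])).2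
  rw [hs] at this
  simp at this

theorem XInv.leaf (hs : ∀ x, s (s x) = x) {D : Set X} {p : X} {r : List X}
    (h : XInv s u D (p :: r)) (h2 : s p ∉ r) (h3 : u (s p) = s p) :
    XInv s u (insert (s p) D) r := by
  obtain ⟨nd, sub, uc, sc⟩ := h
  simp only [List.nodup_cons, List.mem_cons, not_or] at *
  refine ⟨nd.2, fun x hx => Or.inr (sub x (Or.inr hx)), ?_, fun x hx hxr => ?_⟩
  · rintro x (rfl | hx)
    · rw [h3]; exact Or.inl rfl
    · exact Or.inr (uc x hx)
  · by_cases hxp : x = p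
    · subst hxp; exact ⟨Or.inl rfl, h2⟩
    rcases hx with rfl | hx
    · rw [hs]; exact ⟨Or.inr (sub _ (Or.inl rfl)), nd.1⟩
    · have := sc x hx ⟨hxp, hxr⟩
      exact ⟨Or.inr this.1, this.2.2⟩

theorem u_ne (hu : ∀ x, u (u (u x)) = x) {x : X} (h : u x ≠ x) :
    u (u x) ≠ u x ∧ u (u x) ≠ x := by
  refine ⟨fun h2 => h ?_, fun h2 => h ?_⟩
  · have := congrArg (fun y => u (u y)) h2
    simpa [hu] using this
  · have := congrArg u h2
    rw [hu] at this
    exact this.symm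

theorem XInv.u_not (hu : ∀ x, u (u (u x)) = x) {D : Set X} {o : List X}
    (h : XInv s u D o) {x : X} (hx : x ∉ D) : u x ∉ D ∧ u (u x) ∉ D :=
  ⟨fun h1 => hx (by have := h.uc _ (h.uc _ h1); rwa [hu] at this),
   fun h1 => hx (by have := h.uc _ h1; rwa [hu] at this)⟩

theorem XInv.tri (hs : ∀ x, s (s x) = x) (hu : ∀ x, u (u (u x)) = x) {D : Set X} {p : X}
    {r : List X} (h : XInv s u D (p :: r)) (h1 : s p ≠ p) (h2 : s p ∉ r) (h3 : u (s p) ≠ s p) :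
    XInv s u (insert (s p) (insert (u (s p)) (insert (u (u (s p))) D)))
      (u (s p) :: u (u (s p)) :: r) := by
  have hq := h.new hs h1 h2
  have hqu := h.u_not hu hq
  have hne := u_ne hu h3
  obtain ⟨nd, sub, uc, sc⟩ := h
  simp only [List.nodup_cons, List.mem_cons, not_or] at *
  constructor <;> simp only [List.nodup_cons, List.mem_cons, not_or, Set.mem_insert_iff]
  · exact ⟨⟨hne.1.symm, fun h => hqu.1 (sub _ (Or.inr h))⟩, fun h => hqu.2 (sub _ (Or.inr h)), nd.2⟩
  · rintro x (rfl | rfl | hx)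
    · simp
    · simp
    · simp [sub x (Or.inr hx)]
  · rintro x (rfl | rfl | rfl | hx)
    · simp
    · simp
    · simp [hu]
    · simp [uc x hx]
  · intro x hx hxr
    by_cases hxp : x = p
    · subst hxp; exact ⟨Or.inl rfl, fun h => h3 h.symm, fun h => hne.2 h.symm, h2⟩
    have hpD := sub _ (Or.inl rfl)
    rcases hx with rfl | rfl | rfl | hx
    · rw [hs]; exact ⟨by simp [hpD], fun h => hqu.1 (h ▸ hpD), fun h => hqu.2 (h ▸ hpD), nd.1⟩
    · exact absurd rfl hxr.1
    · exact absurd rfl hxr.2.1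
    · have := sc x hx ⟨hxp, hxr.2.2⟩
      exact ⟨by simp [this.1], fun h => hqu.1 (h ▸ this.1), fun h => hqu.2 (h ▸ this.1), this.2.2⟩

theorem XInv.root_leaf {x : X} (h : u x = x) : XInv s u {x} [x] := by
  refine ⟨by simp, by simp, by simp [h], by simp⟩

theorem XInv.root_tri (hu : ∀ x, u (u (u x)) = x) {x : X} (h : u x ≠ x) :
    XInv s u {x, u x, u (u x)} [x, u x, u (u x)] := by
  have hne := u_ne hu h
  refine ⟨by simp [h.symm, hne.2.symm, hne.1.symm], by simp, ?_, ?_⟩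
  · rintro y (rfl | rfl | rfl) <;> simp [hu]
  · rintro y (rfl | rfl | rfl) hy <;> simp at hy

theorem XInv.map {Y : Type*} {s' u' : Y → Y} {f : X → Y} (hfs : ∀ x, f (s x) = s' (f x))
    (hfu : ∀ x, f (u x) = u' (f x)) {D : Set X} {o : List X} (h : XInv s u D o)
    (hi : Set.InjOn f D) : XInv s' u' (f '' D) (o.map f) := by
  obtain ⟨nd, sub, uc, sc⟩ := h
  refine ⟨?_, ?_, ?_, ?_⟩
  · exact nd.map_on (fun x hx y hy hxy => hi (sub x hx) (sub y hy) hxy)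
  · intro y hy
    obtain ⟨x, hx, rfl⟩ := List.mem_map.1 hy
    exact ⟨x, sub x hx, rfl⟩
  · rintro _ ⟨x, hx, rfl⟩
    exact ⟨u x, uc x hx, hfu x⟩
  · rintro _ ⟨x, hx, rfl⟩ hn
    have hx2 := sc x hx (fun h => hn (List.mem_map.2 ⟨x, h, rfl⟩))
    refine ⟨⟨s x, hx2.1, hfs x⟩, fun hm => ?_⟩
    obtain ⟨z, hz, hz2⟩ := List.mem_map.1 hm
    rw [← hfs] at hz2
    exact hx2.2 (hi (sub z hz) hx2.1 hz2 ▸ hz)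
end

/-! Codes are invariant under injective equivariant maps. -/

theorem rm_map {X Y : Type*} {f : X → Y} (hf : Function.Injective f) (q : X) :
    ∀ l : List X, rm deq (f q) (l.map f) = (rm deq q l).map (fun p => (p.1, p.2.map f))
  | [] => rfl
  | a :: l => by
    rw [List.map_cons, rm_cons, rm_cons, rm_map hf q l]
    by_cases h : a = q
    · rw [deq_true h, deq_true (congrArg f h)]; rfl
    · rw [deq_false h, deq_false (fun h2 => h (hf h2))]
      cases rm deq q l <;> rfl

theorem cd_map {X Y : Type*} {s u : X → X} {s' u' : Y → Y} {f : X → Y}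
    (hf : Function.Injective f) (hfs : ∀ x, f (s x) = s' (f x))
    (hfu : ∀ x, f (u x) = u' (f x)) (n : ℕ) : ∀ l : List X, cd s' u' n (l.map f) = cd s u n l := by
  have hd : ∀ a b : X, deq (f a) (f b) = deq a b := by
    intro a b
    simp [deq, hf.eq_iff]
  induction n with
  | zero => intro l; rfl
  | succ n ih =>
    intro l
    cases l with
    | nil => rfl
    | cons p r =>
      rw [List.map_cons, cd_cons, cd_cons, ← hfs, ← hfu, ← hfu, rm_map hf, hd, hd, ih,
        ← List.map_cons, ← List.map_cons, ih]
      cases rm deq (s p) r with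
      | none => rfl
      | some pr => simp only [Option.map_some]; rw [ih]

theorem rcd_map {X Y : Type*} {s u : X → X} {s' u' : Y → Y} {f : X → Y}
    (hf : Function.Injective f) (hfs : ∀ x, f (s x) = s' (f x))
    (hfu : ∀ x, f (u x) = u' (f x)) (x : X) : rcd s' u' (f x) = rcd s u x := by
  have hd : ∀ a b : X, deq (f a) (f b) = deq a b := by
    intro a b
    simp [deq, hf.eq_iff]
  have h1 := cd_map hf hfs hfu 20 [x]
  have h2 := cd_map hf hfs hfu 20 [x, u x, u (u x)]
  simp only [List.map_cons, List.map_nil, hfu] at h1 h2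
  rw [rcd_eq, rcd_eq, h1, h2, ← hfu, hd]

/-! Equal complete codes give isomorphic pointed actions. -/

theorem cd_join {X Y : Type*} {s u : X → X} {s' u' : Y → Y}
    (hs : ∀ x, s (s x) = x) (hu : ∀ x, u (u (u x)) = x)
    (hs' : ∀ x, s' (s' x) = x) (hu' : ∀ x, u' (u' (u' x)) = x) (n : ℕ) :
    ∀ (V : Set (X × Y)) (o : List (X × Y)), XInv (Prod.map s s') (Prod.map u u') V o →
      Set.InjOn Prod.fst V → Set.InjOn Prod.snd V →
      cd s u n (o.map Prod.fst) = cd s' u' n (o.map Prod.snd) → 3 ∈ cd s u n (o.map Prod.fst) →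
      ∃ V' : Set (X × Y), V ⊆ V' ∧ Set.InjOn Prod.fst V' ∧ Set.InjOn Prod.snd V' ∧
        ∀ z ∈ V', Prod.map s s' z ∈ V' ∧ Prod.map u u' z ∈ V' := by
  have hss : ∀ z, Prod.map s s' (Prod.map s s' z) = z := fun z => by
    ext <;> simp [hs, hs']
  have huu : ∀ z, Prod.map u u' (Prod.map u u' (Prod.map u u' z)) = z := fun z => by
    ext <;> simp [hu, hu']
  induction n with
  | zero => intro V o _ _ _ _ h; simp [cd_zero] at h
  | succ n ih =>
    intro V o hV h1 h2 he h3
    cases o with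
    | nil =>
      exact ⟨V, subset_rfl, h1, h2, fun z hz => ⟨(hV.sc z hz (by simp)).1, hV.uc z hz⟩⟩
    | cons p r =>
      have hX := hV.map (s' := s) (u' := u) (f := Prod.fst) (fun _ => rfl) (fun _ => rfl) h1
      have hY := hV.map (s' := s') (u' := u') (f := Prod.snd) (fun _ => rfl) (fun _ => rfl) h2
      rw [List.map_cons] at he h3 hX
      rw [List.map_cons] at he hY
      rcases cd_cases s u n p.1 (r.map Prod.fst) with ⟨a1, e1⟩ | ⟨i, a1, b1, -, e1⟩ |
          ⟨a1, b1, -, c1, e1⟩ | ⟨a1, b1, -, c1, e1⟩ <;>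
      rcases cd_cases s' u' n p.2 (r.map Prod.snd) with ⟨a2, e2⟩ | ⟨j, a2, b2, -, e2⟩ |
          ⟨a2, b2, -, c2, e2⟩ | ⟨a2, b2, -, c2, e2⟩ <;>
      (rw [e1, e2] at he; rw [e1] at h3; simp only [List.cons.injEq] at he) <;>
      first | (exfalso; omega) | skip
      · exact ih V r (hV.fix (Prod.ext a1 a2)) h1 h2 he.2 (by simpa using h3)
      · obtain rfl : i = j := by omega
        rw [List.eraseIdx_map, List.eraseIdx_map] at he
        rw [List.eraseIdx_map] at h3
        simp only [List.getElem?_map, Option.map_eq_some_iff] at b1 b2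
        obtain ⟨z, hz, hz1⟩ := b1
        obtain ⟨z', hz', hz2⟩ := b2
        obtain rfl : z = z' := by rw [hz] at hz'; simpa using hz'
        have hzz : z = Prod.map s s' p := Prod.ext hz1 hz2
        exact ih V _ (hV.pair hss (by rw [← hzz]; exact perm_eraseIdx hz)) h1 h2 he.2
          (by simpa using h3)
      · have nX := hX.new hs a1 b1
        have nY := hY.new hs' a2 b2
        have key := ih _ r (hV.leaf hss
          (fun h => b1 (List.mem_map.2 ⟨_, h, rfl⟩)) (Prod.ext c1 c2))
        have main := fun k1 k2 => key k1 k2 he.2 (by simpa using h3)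
        suffices hI : _ ∧ _ by
          obtain ⟨V', hV', h'⟩ := main hI.1 hI.2
          exact ⟨V', (Set.subset_insert _ _).trans hV', h'⟩
        constructor
        · exact (Set.injOn_insert (fun h => nX ⟨_, h, rfl⟩)).2 ⟨h1, nX⟩
        · exact (Set.injOn_insert (fun h => nX ⟨_, h, rfl⟩)).2 ⟨h2, nY⟩
      · have nX := hX.new hs a1 b1
        have nY := hY.new hs' a2 b2
        have nXu := hX.u_not hu nX
        have nYu := hY.u_not hu' nY
        have eX := u_ne hu c1
        have eY := u_ne hu' c2
        have key := ih _ (_ :: _ :: r) (hV.tri hss huu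
          (fun h => a1 (congrArg Prod.fst h))
          (fun h => b1 (List.mem_map.2 ⟨_, h, rfl⟩)) (fun h => c1 (congrArg Prod.fst h)))
        have main := fun k1 k2 => key k1 k2 he.2 (by simpa using h3)
        suffices hI : _ ∧ _ by
          obtain ⟨V', hV', h'⟩ := main hI.1 hI.2
          exact ⟨V', fun z hz => hV' (by simp [hz]), h'⟩
        constructor
        · rw [Set.injOn_insert, Set.injOn_insert, Set.injOn_insert]
          · refine ⟨⟨⟨h1, nXu.2⟩, ?_⟩, ?_⟩
            · simp only [Set.image_insert_eq]
              rintro (h | h)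
              · exact eX.1 h.symm
              · exact nXu.1 h
            · simp only [Set.image_insert_eq]
              rintro (h | h | h)
              · exact c1 h.symm
              · exact eX.2 h.symm
              · exact nX h
          · exact fun h => nXu.2 ⟨_, h, rfl⟩
          · rintro (h | h)
            · exact eX.1 (congrArg Prod.fst h).symm
            · exact nXu.1 ⟨_, h, rfl⟩
          · rintro (h | h | h)
            · exact c1 (congrArg Prod.fst h).symm
            · exact eX.2 (congrArg Prod.fst h).symm
            · exact nX ⟨_, h, rfl⟩
        · rw [Set.injOn_insert, Set.injOn_insert, Set.injOn_insert]
          · refine ⟨⟨⟨h2, nYu.2⟩, ?_⟩, ?_⟩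
            · simp only [Set.image_insert_eq]
              rintro (h | h)
              · exact eY.1 h.symm
              · exact nYu.1 h
            · simp only [Set.image_insert_eq]
              rintro (h | h | h)
              · exact c2 h.symm
              · exact eY.2 h.symm
              · exact nY h
          · exact fun h => nXu.2 ⟨_, h, rfl⟩
          · rintro (h | h)
            · exact eX.1 (congrArg Prod.fst h).symm
            · exact nXu.1 ⟨_, h, rfl⟩
          · rintro (h | h | h)
            · exact c1 (congrArg Prod.fst h).symm
            · exact eX.2 (congrArg Prod.fst h).symm
            · exact nX ⟨_, h, rfl⟩

theorem rcd_join {X Y : Type*} {s u : X → X} {s' u' : Y → Y}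
    (hs : ∀ x, s (s x) = x) (hu : ∀ x, u (u (u x)) = x)
    (hs' : ∀ x, s' (s' x) = x) (hu' : ∀ x, u' (u' (u' x)) = x) (x : X) (y : Y)
    (he : rcd s u x = rcd s' u' y) (h3 : 3 ∈ rcd s u x) :
    ∃ V' : Set (X × Y), (x, y) ∈ V' ∧ Set.InjOn Prod.fst V' ∧ Set.InjOn Prod.snd V' ∧
        ∀ z ∈ V', Prod.map s s' z ∈ V' ∧ Prod.map u u' z ∈ V' := by
  have huu : ∀ z, Prod.map u u' (Prod.map u u' (Prod.map u u' z)) = z := fun z => by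
    ext <;> simp [hu, hu']
  rcases rcd_cases s u x with ⟨a1, e1⟩ | ⟨a1, e1⟩ <;>
  rcases rcd_cases s' u' y with ⟨a2, e2⟩ | ⟨a2, e2⟩ <;>
  (rw [e1, e2] at he; rw [e1] at h3; simp only [List.cons.injEq] at he) <;>
  first | (exfalso; omega) | skip
  · obtain ⟨V', h, h'⟩ := cd_join hs hu hs' hu' 20 {(x, y)} [(x, y)]
      (XInv.root_leaf (Prod.ext a1 a2)) (by simp) (by simp) he.2 (by simpa using h3)
    exact ⟨V', h rfl, h'⟩
  · have eX := u_ne hu a1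
    have eY := u_ne hu' a2
    have key := cd_join hs hu hs' hu' 20 _ _
      (XInv.root_tri (x := (x, y)) huu (fun h => a1 (congrArg Prod.fst h)))
    have main := fun k1 k2 => key k1 k2 he.2 (by simpa using h3)
    suffices hI : _ ∧ _ by
      obtain ⟨V', h, h'⟩ := main hI.1 hI.2
      exact ⟨V', h (by simp), h'⟩
    constructor
    · rintro z (rfl | rfl | rfl) w (rfl | rfl | rfl) hzw <;> first | rfl | skip
      · exact absurd hzw.symm a1
      · exact absurd hzw.symm eX.2
      · exact absurd hzw a1
      · exact absurd hzw.symm eX.1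
      · exact absurd hzw eX.2
      · exact absurd hzw eX.1
    · rintro z (rfl | rfl | rfl) w (rfl | rfl | rfl) hzw <;> first | rfl | skip
      · exact absurd hzw.symm a2
      · exact absurd hzw.symm eY.2
      · exact absurd hzw a2
      · exact absurd hzw.symm eY.1
      · exact absurd hzw eY.2
      · exact absurd hzw eY.1


/-! ### Boolean bookkeeping -/

theorem band_iff (a b : Bool) : band a b = true ↔ a = true ∧ b = true := by
  cases a <;> cases b <;> simp [band]

theorem allBelow_succ (P : ℕ → Bool) (n : ℕ) :
    allBelow P (n + 1) = band (P n) (allBelow P n) := rfl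

theorem allBelow_iff (P : ℕ → Bool) (n : ℕ) : allBelow P n = true ↔ ∀ j < n, P j = true := by
  induction n with
  | zero => simp [allBelow]
  | succ n ih =>
    rw [allBelow_succ, band_iff, ih]
    constructor
    · rintro ⟨h1, h2⟩ j hj
      rcases Nat.lt_succ_iff_lt_or_eq.1 hj with h | rfl
      · exact h2 j h
      · exact h1
    · intro h
      exact ⟨h n (Nat.lt_succ_self n), fun j hj => h j (Nat.lt_succ_of_lt hj)⟩

theorem allTabs_cons (P : Tab → Bool) (t : Tab) (l : List Tab) :
    allTabs P (t :: l) = band (P t) (allTabs P l) := rfl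

theorem allTabs_iff (P : Tab → Bool) (l : List Tab) :
    allTabs P l = true ↔ ∀ t ∈ l, P t = true := by
  induction l with
  | nil => simp [allTabs]
  | cons t l ih => rw [allTabs_cons, band_iff, ih]; simp

theorem countTabs_cons (P : Tab → Bool) (t : Tab) (l : List Tab) :
    countTabs P (t :: l) = Bool.rec (countTabs P l) (countTabs P l + 1) (P t) := rfl

theorem countTabs_eq (P : Tab → Bool) (l : List Tab) :
    countTabs P l = (l.filter P).length := by
  induction l with
  | nil => rfl
  | cons t l ih =>
    rw [countTabs_cons, ih]
    cases h : P t <;> simp [h]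

theorem countBelow_succ (P : ℕ → Bool) (n : ℕ) :
    countBelow P (n + 1) = Bool.rec (countBelow P n) (countBelow P n + 1) (P n) := rfl

theorem countBelow_eq (P : ℕ → Bool) (n : ℕ) :
    countBelow P n = Nat.card {j : Fin n // P j = true} := by
  have h1 : countBelow P n = ((Finset.range n).filter (fun j => P j = true)).card := by
    induction n with
    | zero => rfl
    | succ n ih =>
      rw [countBelow_succ, Finset.range_add_one, Finset.filter_insert, ih]
      cases h : P n <;> simp
  rw [h1, Nat.card_eq_fintype_card, Fintype.card_subtype]
  refine (Finset.card_bij (fun (a : Fin n) _ => (a : ℕ)) ?_ ?_ ?_).symm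
  · intro a ha; simpa using ha
  · intro a _ b _ h; exact Fin.ext h
  · intro b hb
    simp only [Finset.mem_filter, Finset.mem_range] at hb
    exact ⟨⟨b, hb.1⟩, by simpa using hb.2, rfl⟩

theorem tails_cons (d a : ℕ) (t : List ℕ) (cs : List (List ℕ)) : tails d ((a :: t) :: cs) =
    Bool.rec (tails d cs) (t :: tails d cs) (Nat.beq a d) := rfl

theorem mem_tails (d : ℕ) (w : List ℕ) : ∀ cs, w ∈ tails d cs → d :: w ∈ cs
  | [], h => by simp [tails] at h
  | [] :: cs, h => List.mem_cons_of_mem _ (mem_tails d w cs h)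
  | (a :: t) :: cs, h => by
    rw [tails_cons] at h
    cases hb : Nat.beq a d with
    | false => rw [hb] at h; exact List.mem_cons_of_mem _ (mem_tails d w cs h)
    | true =>
      rw [hb] at h
      have := Nat.eq_of_beq_eq_true hb
      subst this
      rcases List.mem_cons.1 h with rfl | h
      · simp
      · exact List.mem_cons_of_mem _ (mem_tails a w cs h)

theorem hasEnd_cons (a : ℕ) (t : List ℕ) (cs : List (List ℕ)) : hasEnd ((a :: t) :: cs) =
    Bool.rec (hasEnd cs) (Bool.rec (hasEnd cs) true t.isEmpty) (Nat.beq a 3) := rfl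

theorem mem_of_hasEnd : ∀ cs, hasEnd cs = true → [3] ∈ cs
  | [], h => by simp [hasEnd] at h
  | [] :: cs, h => List.mem_cons_of_mem _ (mem_of_hasEnd cs h)
  | (a :: t) :: cs, h => by
    rw [hasEnd_cons] at h
    cases hb : Nat.beq a 3 with
    | false => rw [hb] at h; exact List.mem_cons_of_mem _ (mem_of_hasEnd cs h)
    | true =>
      rw [hb] at h
      have := Nat.eq_of_beq_eq_true hb
      subst this
      cases t with
      | nil => simp
      | cons b t => exact List.mem_cons_of_mem _ (mem_of_hasEnd cs h)

theorem mem_codesUpTo (t : Tab) (c : List ℕ) (n : ℕ) : ∀ acc, c ∈ codesUpTo t n acc →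
    c ∈ acc ∨ ∃ j < n, c = t.code j := by
  induction n with
  | zero => intro acc h; exact Or.inl h
  | succ n ih =>
    intro acc h
    have h' : c ∈ codesUpTo t n (t.code n :: acc) := h
    rcases ih _ h' with h | ⟨j, hj, h⟩
    · rcases List.mem_cons.1 h with h | h
      · exact Or.inr ⟨n, Nat.lt_succ_self n, h⟩
      · exact Or.inl h
    · exact Or.inr ⟨j, Nat.lt_succ_of_lt hj, h⟩

theorem mem_allCodes (c : List ℕ) (l : List Tab) (h : c ∈ allCodes l) :
    ∃ t ∈ l, ∃ j < t.n, c = t.code j := by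
  induction l with
  | nil => simp [allCodes] at h
  | cons t l ih =>
    have h' : c ∈ codesUpTo t t.n (allCodes l) := h
    rcases mem_codesUpTo t c _ _ h' with h | h
    · obtain ⟨t', ht', h⟩ := ih h
      exact ⟨t', List.mem_cons_of_mem _ ht', h⟩
    · exact ⟨t, List.mem_cons_self, h⟩

theorem sortedKeys_cons (t : Tab) (l : List Tab) (a : ℕ) :
    sortedKeys (t :: l) a = band (Nat.ble (a + 1) t.key) (sortedKeys l t.key) := rfl

theorem sortedKeys_pairwise (l : List Tab) : ∀ a, sortedKeys l a = true →
    (∀ t ∈ l, a < t.key) ∧ l.Pairwise (fun t t' => t.key < t'.key) := by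
  induction l with
  | nil => simp
  | cons t l ih =>
    intro a h
    rw [sortedKeys_cons, band_iff] at h
    have h1 := Nat.le_of_ble_eq_true h.1
    obtain ⟨h2, h3⟩ := ih _ h.2
    refine ⟨?_, List.pairwise_cons.2 ⟨h2, h3⟩⟩
    intro t' ht'
    rcases List.mem_cons.1 ht' with rfl | h
    · omega
    · have := h2 t' h; omega

/-! ### Completeness of the search -/

theorem cover_zero (k b : ℕ) (cs : List (List ℕ)) : cover 0 k b cs = false := rfl
theorem cover_end (f : ℕ) (cs : List (List ℕ)) : cover (f + 1) 0 0 cs = hasEnd cs := rfl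
theorem cover_succ (f k b : ℕ) (cs : List (List ℕ)) : cover (f + 1) (k + 1) b cs =
      band
        (Nat.rec true (fun b' _ => band (cover f k b' (tails 0 cs))
          (band (cover f k b' (tails 1 cs)) (cover f (k + 2) b' (tails 2 cs)))) b)
        (allBelow (fun i => cover f (k - 1) b (tails (i + 4) cs)) k) := rfl

open Classical in
/-- three times the indicator of being fixed by `s` -/
noncomputable def wS {X : Type*} (s : X → X) (x : X) : ℕ := if s x = x then 3 else 0

open Classical in
/-- weight of an unvisited point -/
noncomputable def wP {X : Type*} (s u : X → X) (x : X) : ℕ :=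
  1 + (if u x = x then 2 else 0) + wS s x

open Classical in
theorem cover_sound {X : Type*} [Fintype X] {s u : X → X}
    (hs : ∀ x, s (s x) = x) (hu : ∀ x, u (u (u x)) = x)
    (ht : ∀ D : Set X, D.Nonempty → (∀ x ∈ D, s x ∈ D ∧ u x ∈ D) → D = Set.univ) (f : ℕ) :
    ∀ (b : ℕ) (o : List X) (cs : List (List ℕ)) (C : Finset X) (D : Set X),
      D = {x | x ∉ C} → D.Nonempty → XInv s u D o →
      (∑ x ∈ C, wP s u x) + (o.map (wS s)).sum = 3 * b →
      cover f o.length b cs = true → cd s u f o ∈ cs ∧ 3 ∈ cd s u f o := by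
  induction f with
  | zero => intro b o cs C D _ _ _ _ h; simp [cover_zero] at h
  | succ f ih =>
    intro b o cs C D hD hne hI hb hc
    cases o with
    | nil =>
      have hU := ht D hne (fun x hx => ⟨(hI.sc x hx (by simp)).1, hI.uc x hx⟩)
      have hC : C = ∅ := by
        apply Finset.eq_empty_of_forall_notMem
        intro x
        have : x ∈ D := by rw [hU]; trivial
        rw [hD] at this
        exact this
      subst hC
      have hb0 : b = 0 := by simpa using hb.symm
      subst hb0
      rw [List.length_nil, cover_end] at hc
      rw [cd_nil]
      exact ⟨mem_of_hasEnd _ hc, by simp⟩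
    | cons p r =>
      rw [List.length_cons, cover_succ, band_iff] at hc
      obtain ⟨hc1, hc2⟩ := hc
      rw [List.map_cons, List.sum_cons] at hb
      have hpos : 0 < b → ∃ b', b = b' + 1 ∧ cover f r.length b' (tails 0 cs) = true ∧
          cover f r.length b' (tails 1 cs) = true ∧
          cover f (r.length + 2) b' (tails 2 cs) = true := by
        intro h
        cases b with
        | zero => omega
        | succ b' =>
          refine ⟨b', rfl, ?_⟩
          simpa only [band_iff] using hc1
      have hss : s p ≠ p → wS s p = 0 ∧ wS s (s p) = 0 := by
        intro h
        simp [wS, h, hs, h.symm]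
      rcases cd_cases s u f p r with ⟨a, e⟩ | ⟨i, a, bb, -, e⟩ | ⟨a, bb, -, c, e⟩ |
          ⟨a, bb, -, c, e⟩
      · have hw : wS s p = 3 := by simp [wS, a]
        obtain ⟨b', rfl, k, -, -⟩ := hpos (by omega)
        have := ih b' r _ C D hD hne (hI.fix a) (by omega) k
        rw [e]
        exact ⟨mem_tails _ _ _ this.1, List.mem_cons_of_mem _ this.2⟩
      · have hp := perm_eraseIdx bb
        have hsum := (hp.map (wS s)).sum_eq
        rw [List.map_cons, List.sum_cons] at hsum
        have hi : i < r.length := by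
          by_contra h
          rw [List.getElem?_eq_none (by omega)] at bb
          simp at bb
        have hl := hp.length_eq
        rw [List.length_cons] at hl
        have k := (allBelow_iff _ _).1 hc2 i hi
        rw [show r.length - 1 = (r.eraseIdx i).length by omega] at k
        obtain ⟨w1, w2⟩ := hss a
        have := ih b _ _ C D hD hne (hI.pair hs hp) (by omega) k
        rw [e]
        exact ⟨mem_tails _ _ _ this.1, List.mem_cons_of_mem _ this.2⟩
      · have hq := hI.new hs a bb
        have hqC : s p ∈ C := by rw [hD] at hq; simpa using hq
        obtain ⟨w1, w2⟩ := hss a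
        have hw : wP s u (s p) = 3 := by simp [wP, c, w2]
        have hsum := Finset.add_sum_erase C (wP s u) hqC
        obtain ⟨b', rfl, -, k, -⟩ := hpos (by omega)
        have := ih b' r _ (C.erase (s p)) _ (by rw [hD]; ext x; simp; tauto)
          (Set.insert_nonempty _ _) (hI.leaf hs bb c) (by omega) k
        rw [e]
        exact ⟨mem_tails _ _ _ this.1, List.mem_cons_of_mem _ this.2⟩
      · have hq := hI.new hs a bb
        have hqu := hI.u_not hu hq
        have hne' := u_ne hu c
        obtain ⟨w1, w2⟩ := hss a
        have hqC : s p ∈ C := by rw [hD] at hq; simpa using hq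
        have hqC1 : u (s p) ∈ C := by rw [hD] at hqu; simpa using hqu.1
        have hqC2 : u (u (s p)) ∈ C := by rw [hD] at hqu; simpa using hqu.2
        have s1 := Finset.add_sum_erase C (wP s u) hqC
        have s2 := Finset.add_sum_erase (C.erase (s p)) (wP s u) (a := u (s p))
          (by simp [hqC1, c])
        have s3 := Finset.add_sum_erase ((C.erase (s p)).erase (u (s p))) (wP s u)
          (a := u (u (s p))) (by simp [hqC2, hne'])
        have v1 : wP s u (s p) = 1 := by simp [wP, c, w2]
        have v2 : wP s u (u (s p)) = 1 + wS s (u (s p)) := by simp [wP, hne'.1]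
        have v3 : wP s u (u (u (s p))) = 1 + wS s (u (u (s p))) := by simp [wP, hu, hne'.2.symm]
        obtain ⟨b', rfl, -, -, k⟩ := hpos (by omega)
        have := ih b' (u (s p) :: u (u (s p)) :: r) _
          (((C.erase (s p)).erase (u (s p))).erase (u (u (s p)))) _
          (by rw [hD]; ext x; simp; tauto)
          (Set.insert_nonempty _ _) (hI.tri hs hu a bb c)
          (by simp only [List.map_cons, List.sum_cons]; omega) k
        rw [e]
        exact ⟨mem_tails _ _ _ this.1, List.mem_cons_of_mem _ this.2⟩

open Classical in
theorem coverRoot_sound {X : Type*} [Fintype X] {s u : X → X}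
    (hs : ∀ x, s (s x) = x) (hu : ∀ x, u (u (u x)) = x)
    (ht : ∀ D : Set X, D.Nonempty → (∀ x ∈ D, s x ∈ D ∧ u x ∈ D) → D = Set.univ)
    (x : X) (hw : ∑ x, wP s u x = 18) (cs : List (List ℕ)) (hc : coverRoot cs = true) :
    rcd s u x ∈ cs ∧ 3 ∈ rcd s u x := by
  unfold coverRoot at hc
  rw [band_iff] at hc
  rcases rcd_cases s u x with ⟨a, e⟩ | ⟨a, e⟩
  · have s1 := Finset.add_sum_erase Finset.univ (wP s u) (Finset.mem_univ x)
    have v1 : wP s u x = 3 + wS s x := by simp [wP, a]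
    have := cover_sound hs hu ht 20 5 [x] _ (Finset.univ.erase x) _ (by ext y; simp)
      (Set.singleton_nonempty x) (XInv.root_leaf a)
      (by simp only [List.map_cons, List.sum_cons, List.map_nil, List.sum_nil]; omega) hc.1
    rw [e]
    exact ⟨mem_tails _ _ _ this.1, List.mem_cons_of_mem _ this.2⟩
  · have hne' := u_ne hu a
    have s1 := Finset.add_sum_erase Finset.univ (wP s u) (Finset.mem_univ x)
    have s2 := Finset.add_sum_erase (Finset.univ.erase x) (wP s u) (a := u x) (by simp [a])
    have s3 := Finset.add_sum_erase ((Finset.univ.erase x).erase (u x)) (wP s u)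
          (a := u (u x)) (by simp [hne'])
    have v1 : wP s u x = 1 + wS s x := by simp [wP, a]
    have v2 : wP s u (u x) = 1 + wS s (u x) := by simp [wP, hne'.1]
    have v3 : wP s u (u (u x)) = 1 + wS s (u (u x)) := by simp [wP, hu, hne'.2.symm]
    have := cover_sound hs hu ht 20 5 [x, u x, u (u x)] _
      (((Finset.univ.erase x).erase (u x)).erase (u (u x))) _ (by ext y; simp; tauto)
      (Set.insert_nonempty _ _) (XInv.root_tri hu a)
      (by simp only [List.map_cons, List.sum_cons, List.map_nil, List.sum_nil]; omega) hc.2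
    rw [e]
    exact ⟨mem_tails _ _ _ this.1, List.mem_cons_of_mem _ this.2⟩


/-! ### From subgroups to codes -/

theorem Sp_smul_smul {Y : Type*} [MulAction PSL2Z Y] (y : Y) : Sp • Sp • y = y := by
  rw [smul_smul, Sp_mul_Sp, one_smul]

theorem Up_smul_smul {Y : Type*} [MulAction PSL2Z Y] (y : Y) : Up • Up • Up • y = y := by
  have h := Up_cube
  rw [pow_succ, pow_two] at h
  rw [← mul_smul, ← mul_smul, h, one_smul]

theorem closed_of_gen {Y : Type*} [MulAction PSL2Z Y] (D : Set Y)
    (hS : ∀ y ∈ D, Sp • y ∈ D) (hU : ∀ y ∈ D, Up • y ∈ D) (g : PSL2Z) :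
    ∀ y ∈ D, g • y ∈ D := by
  have hg : g ∈ Subgroup.closure {Sp, Up} := by rw [gen_PSL]; trivial
  have hall : ∀ y, (g • y ∈ D ↔ y ∈ D) := by
    induction hg using Subgroup.closure_induction with
    | mem x hx =>
      intro y
      rcases hx with rfl | rfl
      · exact ⟨fun h => by have := hS _ h; rwa [Sp_smul_smul] at this, hS y⟩
      · exact ⟨fun h => by have := hU _ (hU _ h); rwa [Up_smul_smul] at this, hU y⟩
    | one => intro y; rw [one_smul]
    | mul a b _ _ ha hb => intro y; rw [mul_smul, ha, hb]
    | inv a _ ha => intro y; rw [← ha, smul_inv_smul]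
  exact fun y hy => (hall y).2 hy

/-- the code of a pointed action -/
noncomputable def acd {Y : Type*} [MulAction PSL2Z Y] (y : Y) : List ℕ :=
  rcd (fun z => Sp • z) (fun z => Up • z) y

/-- the code of a subgroup -/
noncomputable def gcd (Γ : Subgroup PSL2Z) : List ℕ := acd ((1 : PSL2Z) : PSL2Z ⧸ Γ)

theorem acd_join {X Y : Type*} [MulAction PSL2Z X] [MulAction PSL2Z Y] (x : X) (y : Y)
    (he : acd x = acd y) (h3 : 3 ∈ acd x) (g : PSL2Z) : g • x = x ↔ g • y = y := by
  obtain ⟨V, hV, h1, h2, h⟩ := rcd_join Sp_smul_smul Up_smul_smul Sp_smul_smul Up_smul_smul x y he h3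
  have hg := closed_of_gen V (fun z hz => (h z hz).1) (fun z hz => (h z hz).2) g _ hV
  constructor
  · intro hx
    exact congrArg Prod.snd (h1 hg hV hx)
  · intro hy
    exact congrArg Prod.fst (h2 hg hV hy)

theorem smul_one_coset (Γ : Subgroup PSL2Z) (g : PSL2Z) :
    g • ((1 : PSL2Z) : PSL2Z ⧸ Γ) = ((1 : PSL2Z) : PSL2Z ⧸ Γ) ↔ g ∈ Γ := by
  rw [MulAction.Quotient.smul_coe, eq_comm, QuotientGroup.eq]
  simp

theorem gcd_inj (Γ Γ' : Subgroup PSL2Z) (he : gcd Γ = gcd Γ') (h3 : 3 ∈ gcd Γ) : Γ = Γ' := by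
  ext g
  rw [← smul_one_coset, ← smul_one_coset]
  exact acd_join _ _ he h3 g

theorem gcd_stab {Y : Type*} [MulAction PSL2Z Y] (y : Y) :
    gcd (MulAction.stabilizer PSL2Z y) = acd y := by
  have := rcd_map (MulAction.injective_ofQuotientStabilizer PSL2Z y)
    (s := fun z => Sp • z) (u := fun z => Up • z) (s' := fun z => Sp • z) (u' := fun z => Up • z)
    (fun z => MulAction.ofQuotientStabilizer_smul _ _ _ _)
    (fun z => MulAction.ofQuotientStabilizer_smul _ _ _ _) ((1 : PSL2Z) : PSL2Z ⧸ _)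
  rw [MulAction.ofQuotientStabilizer_mk, one_smul] at this
  exact this.symm

theorem sum_ite_card {X : Type*} [Fintype X] (P : X → Prop) [DecidablePred P] (c : ℕ) :
    ∑ x, (if P x then c else 0) = c * Nat.card {x // P x} := by
  rw [← Finset.sum_filter, Nat.card_eq_fintype_card, Fintype.card_subtype, Finset.sum_const,
    smul_eq_mul, mul_comm]

open Classical in
theorem sum_wP {X : Type*} [Fintype X] (s u : X → X) : ∑ x, wP s u x =
    Nat.card X + 2 * Nat.card {x // u x = x} + 3 * Nat.card {x // s x = x} := by
  unfold wP wS
  rw [Finset.sum_add_distrib, Finset.sum_add_distrib, sum_ite_card, sum_ite_card,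
      Nat.card_eq_fintype_card]
  simp

open Classical in
theorem gcd_mem (Γ : Subgroup PSL2Z) (hi : Γ.index ≠ 0) (h18 : tfIdx Γ = 18) :
    gcd Γ ∈ allCodes reps ∧ 3 ∈ gcd Γ := by
  have : Finite (PSL2Z ⧸ Γ) := Nat.finite_of_card_ne_zero hi
  have := Fintype.ofFinite (PSL2Z ⧸ Γ)
  refine coverRoot_sound Sp_smul_smul Up_smul_smul ?_ _ ?_ _ chk_cover
  · rintro D ⟨d, hd⟩ hD
    ext x
    simp only [Set.mem_univ, iff_true]
    obtain ⟨g, rfl⟩ := MulAction.exists_smul_eq PSL2Z d x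
    exact closed_of_gen D (fun y hy => (hD y hy).1) (fun y hy => (hD y hy).2) g d hd
  · rw [← h18]
    rw [sum_wP]
    unfold tfIdx nFix
    rw [Subgroup.index]
    ring

section
variable {Y : Type*} [MulAction PSL2Z Y] [MulAction.IsPretransitive PSL2Z Y]

/-- the orbit-stabilizer bijection -/
noncomputable def stabEquiv (y : Y) : PSL2Z ⧸ MulAction.stabilizer PSL2Z y ≃ Y :=
  Equiv.ofBijective (MulAction.ofQuotientStabilizer PSL2Z y)
    ⟨MulAction.injective_ofQuotientStabilizer PSL2Z y, fun z => by
      obtain ⟨g, rfl⟩ := MulAction.exists_smul_eq PSL2Z y z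
      exact ⟨(g : PSL2Z ⧸ _), rfl⟩⟩

theorem stabEquiv_smul (y : Y) (g : PSL2Z) (x) : stabEquiv y (g • x) = g • stabEquiv y x :=
  MulAction.ofQuotientStabilizer_smul _ _ _ _

theorem nFix_stab (g : PSL2Z) (y : Y) :
    nFix g (MulAction.stabilizer PSL2Z y) = Nat.card {z : Y // g • z = z} := by
  refine Nat.card_congr ((stabEquiv y).subtypeEquiv fun x => ?_)
  rw [← stabEquiv_smul, (stabEquiv y).apply_eq_iff_eq]

theorem nOrb_stab (g : PSL2Z) (y : Y) :
    nOrb g (MulAction.stabilizer PSL2Z y) =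
      Nat.card (Quotient (Equiv.Perm.SameCycle.setoid (MulAction.toPermHom PSL2Z Y g))) := by
  refine Nat.card_congr (Quotient.congr (stabEquiv y) fun a b => ?_)
  change MulAction.orbitRel _ _ a b ↔ Equiv.Perm.SameCycle _ _ _
  rw [MulAction.orbitRel_apply, Equiv.Perm.sameCycle_comm]
  constructor
  · rintro ⟨⟨_, k, rfl⟩, rfl⟩
    refine ⟨k, ?_⟩
    rw [← map_zpow]
    exact (stabEquiv_smul y (g ^ k) b).symm
  · rintro ⟨k, hk⟩
    refine ⟨⟨g ^ k, k, rfl⟩, ?_⟩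
    apply (stabEquiv y).injective
    rw [← hk, ← map_zpow]
    exact stabEquiv_smul y (g ^ k) b
end

theorem isMin_succ (f : ℕ → ℕ) (j k x : ℕ) :
    isMin f j (k + 1) x = band (Nat.ble j x) (isMin f j k (f x)) := rfl

theorem isMin_iff (f : ℕ → ℕ) (j k : ℕ) : ∀ x, isMin f j k x = true ↔ ∀ i < k, j ≤ f^[i] x := by
  induction k with
  | zero => intro x; simp [isMin]
  | succ k ih =>
    intro x
    rw [isMin_succ, band_iff, ih, Nat.ble_eq]
    constructor
    · rintro ⟨h1, h2⟩ i hi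
      cases i with
      | zero => exact h1
      | succ i => exact h2 i (by omega)
    · intro h
      exact ⟨h 0 (by omega), fun i hi => h (i + 1) (by omega)⟩

theorem nCyc_eq {n : ℕ} (p : Equiv.Perm (Fin n)) (f : ℕ → ℕ) (hf : ∀ j : Fin n, (p j : ℕ) = f j) :
    Nat.card (Quotient (Equiv.Perm.SameCycle.setoid p)) = nCyc f n := by
  have hit : ∀ (i : ℕ) (j : Fin n), f^[i] (j : ℕ) = ((p ^ i) j : ℕ) := by
    intro i
    induction i with
    | zero => intro j; rfl
    | succ i ih => intro j; rw [Function.iterate_succ_apply, ← hf, ih, pow_succ]; rfl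
  have hmin : ∀ j : Fin n, isMin f j n j = true ↔ ∀ k, p.SameCycle j k → j ≤ k := by
    intro j
    rw [isMin_iff]
    constructor
    · intro h k hk
      by_cases hj : j ∈ p.support
      · obtain ⟨i, hi, rfl⟩ := hk.exists_pow_eq_of_mem_support hj
        have := h i (lt_of_lt_of_le hi (by simpa using Finset.card_le_univ (p.cycleOf j).support))
        rw [hit] at this
        exact this
      · obtain ⟨i, rfl⟩ := hk
        rw [Equiv.Perm.notMem_support] at hj
        rw [Equiv.Perm.zpow_apply_eq_self_of_apply_eq_self hj]
    · intro h i _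
      rw [hit]
      exact h _ ⟨i, by simp⟩
  unfold nCyc
  rw [countBelow_eq]
  symm
  refine Nat.card_eq_of_bijective
    (fun j : {j : Fin n // isMin f j n j = true} => (Quotient.mk _ j.1 : Quotient _)) ⟨?_, ?_⟩
  · intro a b hab
    have hab' : p.SameCycle a.1 b.1 := Quotient.exact hab
    exact Subtype.ext (le_antisymm ((hmin _).1 a.2 _ hab') ((hmin _).1 b.2 _ hab'.symm))
  · intro q
    induction q using Quotient.inductionOn with
    | h a =>
    classical
    obtain ⟨m, hm, hm2⟩ := Finset.exists_minimal (s := Finset.univ.filter fun k => p.SameCycle a k)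
      ⟨a, by simpa using Equiv.Perm.SameCycle.refl p a⟩
    simp only [Finset.mem_filter, Finset.mem_univ, true_and] at hm hm2
    refine ⟨⟨m, (hmin m).2 fun k hk => ?_⟩, Quotient.sound hm.symm⟩
    rcases le_total m k with h | h
    · exact h
    · exact hm2 (hm.trans hk) h


/-! ### The subgroups attached to a table -/

/-- `H j` for `j < n` is the conjugacy class of subgroups attached to the table `t`. -/
structure Tab.Realizes (t : Tab) (H : ℕ → Subgroup PSL2Z) : Prop where
  pos : 0 < t.n
  code : ∀ j < t.n, gcd (H j) = t.code j
  conj : ∀ i < t.n, ∀ j < t.n, SubgroupConj (H i) (H j)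
  all : ∀ i < t.n, ∀ K, SubgroupConj (H i) K → ∃ j < t.n, H j = K
  index : ∀ j < t.n, (H j).index = t.n
  fixS : ∀ j < t.n, nFix Sp (H j) = t.e2
  fixU : ∀ j < t.n, nFix (Sp * Tp) (H j) = t.e3
  orbS : ∀ j < t.n, nOrb Sp (H j) = nCyc t.s t.n
  orbU : ∀ j < t.n, nOrb (Sp * Tp) (H j) = nCyc t.u t.n
  orbT : ∀ j < t.n, nOrb Tp (H j) = nCyc (fun x => t.s (t.u x)) t.n

theorem realizes_of_action (t : Tab) (hpos : 0 < t.n) [MulAction PSL2Z (Fin t.n)]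
    [MulAction.IsPretransitive PSL2Z (Fin t.n)]
    (hS : ∀ j : Fin t.n, ((Sp • j : Fin t.n) : ℕ) = t.s j)
    (hU : ∀ j : Fin t.n, ((Up • j : Fin t.n) : ℕ) = t.u j) :
    ∃ H, t.Realizes H := by
  refine ⟨fun j => if h : j < t.n then MulAction.stabilizer PSL2Z (⟨j, h⟩ : Fin t.n) else ⊤, ?_⟩
  constructor
  · exact hpos
  · intro j hj
    rw [dif_pos hj, gcd_stab, Tab.code_eq]
    exact (rcd_map (f := fun j : Fin t.n => (j : ℕ)) Fin.val_injective hS hU ⟨j, hj⟩).symm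
  · intro i hi j hj
    rw [dif_pos hi, dif_pos hj]
    obtain ⟨g, hg⟩ := MulAction.exists_smul_eq PSL2Z (⟨i, hi⟩ : Fin t.n) ⟨j, hj⟩
    exact ⟨g, by rw [← hg, MulAction.stabilizer_smul_eq_stabilizer_map_conj]⟩
  · intro i hi K hK
    rw [dif_pos hi] at hK
    obtain ⟨g, rfl⟩ := hK
    refine ⟨(g • (⟨i, hi⟩ : Fin t.n) : Fin t.n), Fin.is_lt _, ?_⟩
    rw [dif_pos (Fin.is_lt _), ← MulAction.stabilizer_smul_eq_stabilizer_map_conj]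
  · intro j hj
    rw [dif_pos hj, MulAction.index_stabilizer_of_transitive]
    simp
  · intro j hj
    rw [dif_pos hj, nFix_stab, Tab.e2, countBelow_eq]
    refine Nat.card_congr (Equiv.subtypeEquivRight fun z => ?_)
    rw [Fin.ext_iff, hS, Nat.beq_eq]
  · intro j hj
    rw [dif_pos hj, nFix_stab, Tab.e3, countBelow_eq]
    refine Nat.card_congr (Equiv.subtypeEquivRight fun z => ?_)
    rw [Fin.ext_iff, hU, Nat.beq_eq]
  · intro j hj
    rw [dif_pos hj, nOrb_stab]
    exact nCyc_eq _ _ hS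
  · intro j hj
    rw [dif_pos hj, nOrb_stab]
    exact nCyc_eq _ _ hU
  · intro j hj
    rw [dif_pos hj, nOrb_stab]
    refine nCyc_eq _ _ fun j => ?_
    rw [Tp_eq_SU, map_mul, ← hU, ← hS]
    rfl

theorem exists_realizes (t : Tab) (hv : t.valid = true) : ∃ H, t.Realizes H := by
  unfold Tab.valid at hv
  simp only [band_iff, allBelow_iff, Nat.ble_eq, Nat.beq_eq, Bool.or_eq_true] at hv
  obtain ⟨hpos, hv⟩ := hv
  let sF : Fin t.n → Fin t.n := fun j => ⟨t.s j, (hv j j.2).1⟩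
  let uF : Fin t.n → Fin t.n := fun j => ⟨t.u j, (hv j j.2).2.1⟩
  have hs : ∀ j, sF (sF j) = j := fun j => Fin.ext (hv j j.2).2.2.1
  have hu : ∀ j, uF (uF (uF j)) = j := fun j => Fin.ext (hv j j.2).2.2.2.1
  let sP : Equiv.Perm (Fin t.n) := ⟨sF, sF, hs, hs⟩
  let uP : Equiv.Perm (Fin t.n) := ⟨uF, fun j => uF (uF j), hu, hu⟩
  obtain ⟨φ, hφs, hφu⟩ := exists_hom sP uP
    (by ext j; exact congrArg Fin.val (hs j)) (by ext j; exact congrArg Fin.val (hu j))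
  let _ : MulAction PSL2Z (Fin t.n) := MulAction.compHom (Fin t.n) φ
  have hSm : ∀ j : Fin t.n, (Sp • j : Fin t.n) = sF j := fun j => by
    change φ Sp j = _
    rw [hφs]; rfl
  have hUm : ∀ j : Fin t.n, (Up • j : Fin t.n) = uF j := fun j => by
    change φ Up j = _
    rw [hφu]; rfl
  have key : ∀ (m : ℕ) (hm : m < t.n), ∃ g : PSL2Z, g • (⟨m, hm⟩ : Fin t.n) = ⟨0, hpos⟩ := by
    intro m
    induction m using Nat.strong_induction_on with
    | _ m ih =>
      intro hm
      have hj := (hv m hm).2.2.2.2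
      have step : ∀ g : PSL2Z, ((g • (⟨m, hm⟩ : Fin t.n) : Fin t.n) : ℕ) < m →
          ∃ g : PSL2Z, g • (⟨m, hm⟩ : Fin t.n) = ⟨0, hpos⟩ := by
        intro g hg
        obtain ⟨g', hg'⟩ := ih _ hg (Fin.is_lt _)
        exact ⟨g' * g, by rw [mul_smul]; exact hg'⟩
      rcases hj with ((h | h) | h) | h
      · subst h; exact ⟨1, one_smul _ _⟩
      · exact step Sp (by rw [hSm]; exact h)
      · exact step Up (by rw [hUm]; exact h)
      · exact step (Up * Up) (by rw [mul_smul, hUm, hUm]; exact h)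
  have : MulAction.IsPretransitive PSL2Z (Fin t.n) := by
    constructor
    intro x y
    obtain ⟨g, hg⟩ := key x x.2
    obtain ⟨g', hg'⟩ := key y y.2
    refine ⟨g'⁻¹ * g, ?_⟩
    rw [mul_smul, inv_smul_eq_iff]
    exact hg.trans hg'.symm
  exact realizes_of_action t hpos (fun j => by rw [hSm]) (fun j => by rw [hUm])

/-! ### Counting conjugacy classes -/

open Pointwise in
theorem subgroupConj_iff {G : Type*} [Group G] (H K : Subgroup G) :
    SubgroupConj H K ↔ ∃ g : G, MulAut.conj g • H = K := Iff.rfl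

open Pointwise in
theorem subgroupConj_equiv {G : Type*} [Group G] : Equivalence (SubgroupConj (G := G)) := by
  constructor
  · intro H
    exact (subgroupConj_iff H H).2 ⟨1, by rw [map_one, one_smul]⟩
  · intro H K h
    obtain ⟨g, rfl⟩ := (subgroupConj_iff _ _).1 h
    exact (subgroupConj_iff _ _).2 ⟨g⁻¹, by rw [map_inv, inv_smul_smul]⟩
  · intro H K L h h'
    obtain ⟨g, rfl⟩ := (subgroupConj_iff _ _).1 h
    obtain ⟨g', rfl⟩ := (subgroupConj_iff _ _).1 h'
    exact (subgroupConj_iff _ _).2 ⟨g' * g, by rw [map_mul, mul_smul]⟩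

theorem key_le {t t' : Tab} (ht : t ∈ reps) {H H' : ℕ → Subgroup PSL2Z}
    (hH : t.Realizes H) (hH' : t'.Realizes H') (h : SubgroupConj (H 0) (H' 0)) :
    t.key ≤ t'.key := by
  obtain ⟨j, hj, e⟩ := hH.all 0 hH.pos _ h
  have e2 : t.code j = t'.code 0 := by
    rw [← hH.code j hj, ← hH'.code 0 hH'.pos, e]
  have hm := (allTabs_iff _ _).1 chk_min t ht
  have := (allBelow_iff _ _).1 hm j hj
  rw [e2] at this
  exact Nat.le_of_ble_eq_true this

theorem countClasses_eq (P : Subgroup PSL2Z → Prop) (P' : Tab → Bool)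
    (h1 : ∀ Γ, P Γ → Γ.index ≠ 0 ∧ tfIdx Γ = 18)
    (h2 : ∀ t ∈ reps, ∀ H, t.Realizes H → ∀ j < t.n, P (H j) ↔ P' t = true) :
    countClasses P = countTabs P' reps := by
  have hex : ∀ t : Tab, ∃ H, t ∈ reps → t.Realizes H := by
    intro t
    by_cases ht : t ∈ reps
    · obtain ⟨H, hH⟩ := exists_realizes t ((allTabs_iff _ _).1 chk_valid t ht)
      exact ⟨H, fun _ => hH⟩
    · exact ⟨fun _ => ⊤, fun h => absurd h ht⟩
  choose H hH using hex
  rw [countTabs_eq]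
  set l := reps.filter P' with hl
  have hmem : ∀ t ∈ l, t ∈ reps ∧ P' t = true := fun t ht => List.mem_filter.1 ht
  have hpw : l.Pairwise (fun t t' => t.key < t'.key) :=
    (sortedKeys_pairwise reps 0 chk_sorted).2.filter _
  unfold countClasses
  let F : Fin l.length → Quot fun A B : {Γ : Subgroup PSL2Z // P Γ} => SubgroupConj A.1 B.1 :=
    fun i => Quot.mk _ ⟨H l[i] 0, by
      obtain ⟨ha, hb⟩ := hmem l[i] (List.getElem_mem _)
      exact (h2 _ ha _ (hH _ ha) 0 (hH _ ha).pos).2 hb⟩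
  have hF : Function.Bijective F := by
    constructor
    · intro i j hij
      have hc : SubgroupConj (H l[i] 0) (H l[j] 0) := by
        have heq : Equivalence (fun A B : {Γ : Subgroup PSL2Z // P Γ} => SubgroupConj A.1 B.1) :=
          ⟨fun A => subgroupConj_equiv.refl _, fun h => subgroupConj_equiv.symm h,
            fun h h' => subgroupConj_equiv.trans h h'⟩
        exact heq.eqvGen_iff.1 (Quot.eqvGen_exact hij)
      have hi := (hmem l[i] (List.getElem_mem _)).1
      have hj := (hmem l[j] (List.getElem_mem _)).1
      have k1 := key_le hi (hH _ hi) (hH _ hj) hc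
      have k2 := key_le hj (hH _ hj) (hH _ hi) (subgroupConj_equiv.symm hc)
      rw [List.pairwise_iff_getElem] at hpw
      rcases lt_trichotomy i j with h | h | h
      · have := hpw i j i.2 j.2 h
        exact absurd k2 (not_le.2 this)
      · exact h
      · have := hpw j i j.2 i.2 h
        exact absurd k1 (not_le.2 this)
    · intro q
      induction q using Quot.inductionOn with
      | h A =>
      obtain ⟨Γ, hΓ⟩ := A
      obtain ⟨hi, h18⟩ := h1 Γ hΓ
      obtain ⟨hm, h3⟩ := gcd_mem Γ hi h18
      obtain ⟨t, ht, j, hj, e⟩ := mem_allCodes _ _ hm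
      have hR := hH t ht
      have hΓeq : Γ = H t j := gcd_inj _ _ (by rw [e, hR.code j hj]) h3
      have hP' : P' t = true := (h2 t ht _ hR j hj).1 (hΓeq ▸ hΓ)
      have htl : t ∈ l := List.mem_filter.2 ⟨ht, hP'⟩
      obtain ⟨i, hi, rfl⟩ := List.mem_iff_getElem.1 htl
      refine ⟨⟨i, hi⟩, Quot.sound ?_⟩
      change SubgroupConj (H l[i] 0) Γ
      rw [hΓeq]
      exact hR.conj 0 hR.pos j hj
  rw [← Nat.card_eq_of_bijective F hF]
  simp

theorem genusZero_iff {t : Tab} {H : ℕ → Subgroup PSL2Z} (hH : t.Realizes H) {j : ℕ}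
    (hj : j < t.n) : GenusZero (H j) ↔ t.genusZero = true := by
  unfold GenusZero Tab.genusZero
  rw [hH.orbS j hj, hH.orbU j hj, hH.orbT j hj, hH.index j hj, Nat.beq_eq]

theorem kind_facts (a b : ℕ) : kind a b ≠ 0 ∧ (kind a b = 1 ↔ a = 0 ∧ b = 0) ∧
    (kind a b = 2 ↔ 0 < a) ∧ (kind a b = 3 ↔ a = 0 ∧ b = 1) ∧ (kind a b = 4 ↔ a = 0 ∧ 2 ≤ b) := by
  rcases a with _ | a <;> rcases b with _ | _ | b <;> simp [kind]

theorem realizes_facts {t : Tab} (ht : t ∈ reps) {H : ℕ → Subgroup PSL2Z} (hH : t.Realizes H)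
    {j : ℕ} (hj : j < t.n) :
    (H j).index ≠ 0 ∧ tfIdx (H j) = 18 ∧ (t.c ≠ 0 ↔ GenusZero (H j)) ∧
    (t.c = 1 ↔ GenusZero (H j) ∧ TorsionFree (H j)) ∧
    (t.c = 2 ↔ GenusZero (H j) ∧ 0 < nFix Sp (H j)) ∧
    (t.c = 3 ↔ GenusZero (H j) ∧ nFix Sp (H j) = 0 ∧ nFix (Sp * Tp) (H j) = 1) ∧
    (t.c = 4 ↔ GenusZero (H j) ∧ nFix Sp (H j) = 0 ∧ 2 ≤ nFix (Sp * Tp) (H j)) := by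
  have hi : (H j).index ≠ 0 := by rw [hH.index j hj]; exact hH.pos.ne'
  have hk := (allTabs_iff _ _).1 chk_kind t ht
  unfold Tab.kindOK at hk
  rw [band_iff, Nat.beq_eq, Nat.beq_eq] at hk
  obtain ⟨hk1, hk2⟩ := hk
  rw [torsionFree_iff _ hi, genusZero_iff hH hj, hH.fixS j hj, hH.fixU j hj]
  refine ⟨hi, ?_, ?_⟩
  · unfold tfIdx
    rw [hH.index j hj, hH.fixS j hj, hH.fixU j hj, hk1]
  · obtain ⟨f0, f1, f2, f3, f4⟩ := kind_facts t.e2 t.e3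
    cases hg : t.genusZero with
    | false =>
      rw [hg] at hk2
      simp only at hk2
      simp [hk2]
    | true =>
      rw [hg] at hk2
      simp only at hk2
      rw [hk2]
      simp only [true_and]
      exact ⟨by simp [f0], f1, f2, f3, f4⟩


/-- There are exactly 232 conjugacy classes of genus-zero finite-index subgroups `Γ` of
`PSL(2,ℤ)` with `n + 3e₂ + 2e₃ = 18`; among them exactly 26 are torsion free, 143 have
`e₂ > 0`, 32 have `e₂ = 0, e₃ = 1`, and 31 have `e₂ = 0, e₃ ≥ 2`. -/
theorem count_K18 :
    countClasses (fun Γ => Γ.index ≠ 0 ∧ GenusZero Γ ∧ tfIdx Γ = 18) = 232 ∧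
    countClasses (fun Γ => Γ.index ≠ 0 ∧ GenusZero Γ ∧ tfIdx Γ = 18 ∧ TorsionFree Γ) = 26 ∧
    countClasses (fun Γ => Γ.index ≠ 0 ∧ GenusZero Γ ∧ tfIdx Γ = 18 ∧ 0 < nFix Sp Γ) = 143 ∧
    countClasses (fun Γ => Γ.index ≠ 0 ∧ GenusZero Γ ∧ tfIdx Γ = 18 ∧
      nFix Sp Γ = 0 ∧ nFix (Sp * Tp) Γ = 1) = 32 ∧
    countClasses (fun Γ => Γ.index ≠ 0 ∧ GenusZero Γ ∧ tfIdx Γ = 18 ∧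
      nFix Sp Γ = 0 ∧ 2 ≤ nFix (Sp * Tp) Γ) = 31 := by
  obtain ⟨c0, c1, c2, c3, c4⟩ := chk_count
  refine ⟨?_, ?_, ?_, ?_, ?_⟩
  · refine (countClasses_eq _ _ ?_ ?_).trans c0
    · exact fun Γ h => ⟨h.1, h.2.2⟩
    intro t ht H hH j hj
    obtain ⟨a, b, k0, k1, k2, k3, k4⟩ := realizes_facts ht hH hj
    rw [Bool.not_eq_true', ← Bool.not_eq_true, Nat.beq_eq]
    exact ⟨fun h => k0.2 h.2.1, fun h => ⟨a, k0.1 h, b⟩⟩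
  · refine (countClasses_eq _ _ ?_ ?_).trans c1
    · exact fun Γ h => ⟨h.1, h.2.2.1⟩
    intro t ht H hH j hj
    obtain ⟨a, b, k0, k1, k2, k3, k4⟩ := realizes_facts ht hH hj
    rw [Nat.beq_eq]
    exact ⟨fun h => k1.2 ⟨h.2.1, h.2.2.2⟩, fun h => ⟨a, (k1.1 h).1, b, (k1.1 h).2⟩⟩
  · refine (countClasses_eq _ _ ?_ ?_).trans c2
    · exact fun Γ h => ⟨h.1, h.2.2.1⟩
    intro t ht H hH j hj
    obtain ⟨a, b, k0, k1, k2, k3, k4⟩ := realizes_facts ht hH hj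
    rw [Nat.beq_eq]
    exact ⟨fun h => k2.2 ⟨h.2.1, h.2.2.2⟩, fun h => ⟨a, (k2.1 h).1, b, (k2.1 h).2⟩⟩
  · refine (countClasses_eq _ _ ?_ ?_).trans c3
    · exact fun Γ h => ⟨h.1, h.2.2.1⟩
    intro t ht H hH j hj
    obtain ⟨a, b, k0, k1, k2, k3, k4⟩ := realizes_facts ht hH hj
    rw [Nat.beq_eq]
    exact ⟨fun h => k3.2 ⟨h.2.1, h.2.2.2⟩, fun h => ⟨a, (k3.1 h).1, b, (k3.1 h).2⟩⟩
  · refine (countClasses_eq _ _ ?_ ?_).trans c4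
    · exact fun Γ h => ⟨h.1, h.2.2.1⟩
    intro t ht H hH j hj
    obtain ⟨a, b, k0, k1, k2, k3, k4⟩ := realizes_facts ht hH hj
    rw [Nat.beq_eq]
    exact ⟨fun h => k4.2 ⟨h.2.1, h.2.2.2⟩, fun h => ⟨a, (k4.1 h).1, b, (k4.1 h).2⟩⟩
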